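/- arXiv:1506.06002 — 2 statements merged into one kernel-verified Lean document; each statement's English description precedes it below -/
import Mathlib

section
/- Every element of the sister group Γ_s^(11) can be written as ε·W, where ε ∈ {1,−1} and W is a finite product of the matrices I₀ = [[0,0,i/√11],[0,1,0],[i√11,0,0]], R₁ = [[1,0,0],[0,−1,0],[0,0,1]], R₂ = [[1,1,iω₁₁/√11],[0,−1,1],[0,0,1]], R₃ = [[1,ω̄₁₁,−3/2+i/(2√11)],[0,−1,ω₁₁],[0,0,1]], T = [[1,0,i/√11],[0,1,0],[0,0,1]] and their inverses, where ω₁₁ = (1+i√11)/2. In other words, Γ_s^(11) is generated, modulo scalar matrices ±I, by I₀, R₁, R₂, R₃, T. -/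
noncomputable section

open Matrix

/-- The Hermitian form matrix `J`. -/
def matJ : Matrix (Fin 3) (Fin 3) ℂ := !![0,0,1; 0,1,0; 1,0,0]

/-- Membership in `U(2,1;J)`. -/
def inU21 (M : Matrix (Fin 3) (Fin 3) ℂ) : Prop := IsUnit M ∧ Mᴴ * matJ * M = matJ

/-- `i√11`. -/
def isq11 : ℂ := Complex.I * (Real.sqrt 11 : ℂ)

/-- `ω₁₁ = (1 + i√11)/2`. -/
def ω₁₁ : ℂ := (1 + Complex.I * (Real.sqrt 11 : ℂ)) / 2

/-- Membership in the ring of integers `O₁₁ = ℤ + ℤ·ω₁₁`. -/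
def inO11 (z : ℂ) : Prop := ∃ a b : ℤ, z = (a : ℂ) + (b : ℂ) * ω₁₁

/-- The sister group `Γ_s^(11)`. -/
def GammaS11 (M : Matrix (Fin 3) (Fin 3) ℂ) : Prop :=
  inU21 M ∧ inO11 (M 0 0) ∧ inO11 (M 0 1) ∧ inO11 (M 1 1) ∧ inO11 (M 1 2) ∧
    inO11 (M 2 2) ∧ inO11 (isq11 * M 0 2) ∧ inO11 (M 1 0 / isq11) ∧
    inO11 (M 2 0 / isq11) ∧ inO11 (M 2 1 / isq11)

def I₀ : Matrix (Fin 3) (Fin 3) ℂ :=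
  !![0, 0, Complex.I / (Real.sqrt 11 : ℂ); 0, 1, 0; Complex.I * (Real.sqrt 11 : ℂ), 0, 0]

def R₁ : Matrix (Fin 3) (Fin 3) ℂ := !![1,0,0; 0,-1,0; 0,0,1]

def R₂ : Matrix (Fin 3) (Fin 3) ℂ :=
  !![1, 1, Complex.I * ω₁₁ / (Real.sqrt 11 : ℂ); 0, -1, 1; 0, 0, 1]

def R₃ : Matrix (Fin 3) (Fin 3) ℂ :=
  !![1, (starRingEnd ℂ) ω₁₁, -3/2 + Complex.I / (2 * (Real.sqrt 11 : ℂ));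
     0, -1, ω₁₁; 0, 0, 1]

def T : Matrix (Fin 3) (Fin 3) ℂ :=
  !![1, 0, Complex.I / (Real.sqrt 11 : ℂ); 0, 1, 0; 0, 0, 1]

/-!
The elements of `Γ_s^(11)` fixing `∞`, those with bottom left entry `0`, are up to the diagonal
units `±1` translations of the Heisenberg group, and `R₁, R₂, R₃, T` generate them together
with `-1`. A general element moves `∞` to a boundary point, and an element `h` decreases the norm of
the bottom left entry by left multiplication exactly when that point lies inside the isometric
sphere of `h`. Up to the stabiliser of `∞`, the spheres of `I₀` and of `I₀ N I₀`, for the two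
horizontal translations `N` by `-1` of height `±1/2`, cover the boundary. Since the entry is `i√11`
times an element of `O₁₁`, whose norm is a natural number, the descent ends in the stabiliser.
-/

/-- The subring of `n × n` matrices `M` with `d ^ e i j * M i j ∈ R` for all `i`, `j`: the tiled
order over `R` with exponent matrix `-e`. -/
def tiledOrder {n K : Type*} [Fintype n] [DecidableEq n] [Field K] (R : Subring K) {d : K}
    (hd : d ∈ R) (hd₀ : d ≠ 0) (e : n → n → ℤ) (he : ∀ i, e i i = 0)
    (he_add : ∀ i j k, e i k + e k j ≤ e i j) : Subring (Matrix n n K) where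
  carrier := {M | ∀ i j, d ^ e i j * M i j ∈ R}
  mul_mem' {M N} hM hN i j := by
    rw [mul_apply, Finset.mul_sum]
    refine sum_mem fun k _ => ?_
    obtain ⟨m, hm⟩ := Int.le.dest (he_add i j k)
    have h : d ^ e i j * (M i k * N k j) =
        d ^ m * ((d ^ e i k * M i k) * (d ^ e k j * N k j)) := by
      rw [← hm, zpow_add₀ hd₀, zpow_add₀ hd₀, zpow_natCast]
      ring
    exact h ▸ mul_mem (pow_mem hd m) (mul_mem (hM i k) (hN k j))
  one_mem' i j := by
    rcases eq_or_ne i j with rfl | hij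
    · simp [he]
    · simp [one_apply_ne hij]
  add_mem' hM hN i j := by
    rw [Matrix.add_apply, mul_add]
    exact add_mem (hM i j) (hN i j)
  zero_mem' i j := by simp
  neg_mem' hM i j := by
    rw [Matrix.neg_apply, mul_neg]
    exact neg_mem (hM i j)

/-- The group of invertible matrices preserving the sesquilinear form with Gram matrix `J`. -/
def formUnitaryGroup {n R : Type*} [Fintype n] [DecidableEq n] [CommRing R] [StarRing R]
    (J : Matrix n n R) : Subgroup (GL n R) where
  carrier := {g | (g : Matrix n n R)ᴴ * J * g = J}
  mul_mem' {g h} (hg : _ = J) (hh : _ = J) := by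
    calc ((g * h : GL n R) : Matrix n n R)ᴴ * J * (g * h : GL n R)
        = (h : Matrix n n R)ᴴ * ((g : Matrix n n R)ᴴ * J * g) * h := by
          simp only [GeneralLinearGroup.coe_mul, conjTranspose_mul, Matrix.mul_assoc]
      _ = J := by rw [hg, hh]
  one_mem' := by simp
  inv_mem' {g} (hg : _ = J) := by
    have hinv : (g : Matrix n n R) * (↑g⁻¹ : Matrix n n R) = 1 := g.mul_inv
    calc (↑g⁻¹ : Matrix n n R)ᴴ * J * (↑g⁻¹ : Matrix n n R)
        = (↑g⁻¹ : Matrix n n R)ᴴ * ((g : Matrix n n R)ᴴ * J * g) * (↑g⁻¹ : Matrix n n R) := by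
          rw [hg]
      _ = ((g : Matrix n n R) * (↑g⁻¹ : Matrix n n R))ᴴ * J *
            ((g : Matrix n n R) * (↑g⁻¹ : Matrix n n R)) := by
          simp only [conjTranspose_mul, Matrix.mul_assoc]
      _ = J := by rw [hinv, conjTranspose_one, Matrix.one_mul, Matrix.mul_one]

lemma mem_closure_insert_neg_one_iff {G : Type*} [Group G] [HasDistribNeg G] {s : Set G} {g : G} :
    g ∈ Subgroup.closure (insert (-1) s) ↔
      g ∈ Subgroup.closure s ∨ -g ∈ Subgroup.closure s := by
  have hle : Subgroup.closure s ≤ Subgroup.closure (insert (-1) s) :=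
    Subgroup.closure_mono (Set.subset_insert _ _)
  refine ⟨fun hg => ?_, ?_⟩
  · induction hg using Subgroup.closure_induction with
    | mem x hx =>
      rcases hx with rfl | hx
      · exact Or.inr (by simp)
      · exact Or.inl (Subgroup.subset_closure hx)
    | one => exact Or.inl (one_mem _)
    | mul x y _ _ hx hy =>
      rcases hx with hx | hx <;> rcases hy with hy | hy
      · exact Or.inl (mul_mem hx hy)
      · exact Or.inr (mul_neg x y ▸ mul_mem hx hy)
      · exact Or.inr (neg_mul x y ▸ mul_mem hx hy)
      · exact Or.inl (neg_mul_neg x y ▸ mul_mem hx hy)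
    | inv x _ hx => exact hx.imp inv_mem fun h => inv_neg (a := x) ▸ inv_mem h
  · rintro (hg | hg)
    · exact hle hg
    · have h := mul_mem (Subgroup.subset_closure (Set.mem_insert (-1) s)) (hle hg)
      rwa [neg_one_mul, neg_neg] at h

lemma mul_apply_eq_of_row_eq_smul {l m n R : Type*} [Fintype m] [NonUnitalSemiring R]
    {M M' : Matrix l m R} {c : R} {i : l} (h : M i = c • M' i) (N : Matrix m n R) (j : n) :
    (M * N) i j = c * (M' * N) i j := by
  rw [mul_apply_eq_vecMul, mul_apply_eq_vecMul, h, smul_vecMul, Pi.smul_apply, smul_eq_mul]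

namespace GammaS11

open Complex (normSq normSq_apply)
open scoped ComplexConjugate

/-! ### The ring of integers -/

lemma sqrt_eleven_mul_self : (√11 : ℝ) * √11 = 11 := Real.mul_self_sqrt (by norm_num)

lemma isq11_re : isq11.re = 0 := by simp [isq11]

lemma isq11_im : isq11.im = √11 := by simp [isq11]

lemma isq11_mul_self : isq11 * isq11 = -11 := by
  apply Complex.ext <;> simp [isq11_re, isq11_im]

lemma isq11_ne_zero : isq11 ≠ 0 := fun h => by simpa [h] using isq11_mul_self

lemma conj_isq11 : conj isq11 = -isq11 := by simp [isq11]

lemma ω₁₁_eq : ω₁₁ = (1 + isq11) / 2 := rfl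

lemma I_div_sqrt_eleven : Complex.I / (√11 : ℝ) = isq11 / 11 := by
  apply Complex.ext <;>
    simp only [isq11, Complex.div_ofReal_re, Complex.div_ofReal_im, Complex.I_re, Complex.I_im]
  · simp
  · simp [Real.sqrt_div_self']

lemma exists_eq_add_mul_isq11 (z : ℂ) : ∃ x y : ℝ, z = x + y * isq11 :=
  ⟨z.re, z.im / √11, by
    apply Complex.ext <;> simp [isq11_re, isq11_im]⟩

lemma normSq_add_mul_isq11 (x y : ℝ) : normSq (x + y * isq11) = x ^ 2 + 11 * y ^ 2 := by
  simp only [normSq_apply, Complex.add_re, Complex.add_im, Complex.mul_re, Complex.mul_im,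
    Complex.ofReal_re, Complex.ofReal_im, isq11_re, isq11_im]
  linear_combination y ^ 2 * sqrt_eleven_mul_self

/-- The ring of integers `O₁₁` as a subring of `ℂ`. -/
def integers : Subring ℂ where
  carrier := {z | inO11 z}
  mul_mem' := by
    rintro _ _ ⟨a, b, rfl⟩ ⟨c, d, rfl⟩
    refine ⟨a * c - 3 * b * d, a * d + b * c + b * d, ?_⟩
    push_cast [ω₁₁_eq]
    linear_combination (b * d / 4 : ℂ) * isq11_mul_self
  one_mem' := ⟨1, 0, by simp⟩
  add_mem' := by
    rintro _ _ ⟨a, b, rfl⟩ ⟨c, d, rfl⟩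
    exact ⟨a + c, b + d, by push_cast; ring⟩
  zero_mem' := ⟨0, 0, by simp⟩
  neg_mem' := by
    rintro _ ⟨a, b, rfl⟩
    exact ⟨-a, -b, by push_cast; ring⟩

lemma mem_integers_iff {z : ℂ} : z ∈ integers ↔ inO11 z := Iff.rfl

lemma ω₁₁_mem_integers : ω₁₁ ∈ integers := ⟨0, 1, by simp⟩

lemma isq11_mem_integers : isq11 ∈ integers := ⟨-1, 2, by rw [ω₁₁_eq]; push_cast; ring⟩

lemma conj_mem_integers {z : ℂ} (hz : z ∈ integers) : conj z ∈ integers := by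
  obtain ⟨a, b, rfl⟩ := hz
  refine ⟨a + b, -b, ?_⟩
  simp only [ω₁₁_eq, map_add, map_mul, map_div₀, map_one, map_ofNat, map_intCast, conj_isq11]
  push_cast
  ring

lemma normSq_intCast_add_mul_ω₁₁ (a b : ℤ) :
    normSq (a + b * ω₁₁) = (a ^ 2 + a * b + 3 * b ^ 2 : ℤ) := by
  have h : (a + b * ω₁₁ : ℂ) = (a + b / 2 : ℝ) + (b / 2 : ℝ) * isq11 := by
    push_cast [ω₁₁_eq]
    ring
  rw [h, normSq_add_mul_isq11]
  push_cast
  ring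

lemma normSq_ω₁₁ : normSq ω₁₁ = 3 := by
  simpa using normSq_intCast_add_mul_ω₁₁ 0 1

lemma exists_nat_normSq_eq {z : ℂ} (hz : z ∈ integers) : ∃ n : ℕ, normSq z = n := by
  obtain ⟨a, b, rfl⟩ := hz
  refine ⟨(a ^ 2 + a * b + 3 * b ^ 2).toNat, ?_⟩
  have h : 0 ≤ a ^ 2 + a * b + 3 * b ^ 2 := by nlinarith [sq_nonneg (2 * a + b)]
  rw [normSq_intCast_add_mul_ω₁₁, ← Int.cast_natCast, Int.toNat_of_nonneg h]

lemma eq_one_or_eq_neg_one_of_normSq_eq_one {z : ℂ} (hz : z ∈ integers) (h : normSq z = 1) :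
    z = 1 ∨ z = -1 := by
  obtain ⟨a, b, rfl⟩ := hz
  rw [normSq_intCast_add_mul_ω₁₁] at h
  norm_cast at h
  have hb : b = 0 := by
    refine sq_eq_zero_iff.1 (le_antisymm ?_ (sq_nonneg b))
    by_contra! hb
    nlinarith [sq_nonneg (2 * a + b)]
  subst hb
  rcases (by simpa using h : a = 1 ∨ a = -1) with rfl | rfl <;> simp

lemma eq_one_or_eq_neg_one_of_mul_eq_one {z w : ℂ} (hz : z ∈ integers) (hw : w ∈ integers)
    (h : z * w = 1) : z = 1 ∨ z = -1 := by
  obtain ⟨m, hm⟩ := exists_nat_normSq_eq hz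
  obtain ⟨n, hn⟩ := exists_nat_normSq_eq hw
  have hmn : m * n = 1 := by
    have := congrArg normSq h
    rw [map_mul, map_one, hm, hn] at this
    exact_mod_cast this
  refine eq_one_or_eq_neg_one_of_normSq_eq_one hz ?_
  rw [hm, Nat.eq_one_of_mul_eq_one_right hmn, Nat.cast_one]

lemma exists_int_eq_of_ofReal_mem_integers {t : ℝ} (ht : (t : ℂ) ∈ integers) :
    ∃ n : ℤ, t = n := by
  obtain ⟨a, b, h⟩ := ht
  have hb : b = 0 := by
    have := congrArg Complex.im h
    simpa [ω₁₁_eq, isq11_im] using this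
  refine ⟨a, ?_⟩
  simpa [hb] using congrArg Complex.re h

/-! ### The sister group -/

/-- The exponents `e i j` for which `Γ_s^(11)` consists of the `M ∈ U(2,1;J)` with
`isq11 ^ e i j * M i j ∈ O₁₁`. -/
def sisterExponent : Matrix (Fin 3) (Fin 3) ℤ := !![0, 0, 1; -1, 0, 0; -1, -1, 0]

lemma sisterExponent_rev (i j : Fin 3) : sisterExponent j.rev i.rev = sisterExponent i j := by
  fin_cases i <;> fin_cases j <;> rfl

/-- The order in `M₃(ℂ)` cut out by the integrality conditions of `Γ_s^(11)`. -/
def sisterOrder : Subring (Matrix (Fin 3) (Fin 3) ℂ) :=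
  tiledOrder integers isq11_mem_integers isq11_ne_zero sisterExponent (by decide) (by decide)

lemma mem_sisterOrder_iff {M : Matrix (Fin 3) (Fin 3) ℂ} :
    M ∈ sisterOrder ↔ M 0 0 ∈ integers ∧ M 0 1 ∈ integers ∧ M 1 1 ∈ integers ∧
      M 1 2 ∈ integers ∧ M 2 2 ∈ integers ∧ isq11 * M 0 2 ∈ integers ∧ M 1 0 / isq11 ∈ integers ∧
      M 2 0 / isq11 ∈ integers ∧ M 2 1 / isq11 ∈ integers := by
  change (∀ i j, isq11 ^ sisterExponent i j * M i j ∈ integers) ↔ _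
  simp only [Fin.forall_fin_succ, sisterExponent, div_eq_inv_mul, of_apply, cons_val',
    cons_val_zero, cons_val_fin_one, cons_val_succ, Fin.succ_zero_eq_one,
    Fin.succ_one_eq_two, IsEmpty.forall_iff, zpow_zero, zpow_one, _root_.zpow_neg_one, one_mul,
    and_true]
  tauto

lemma mem_formUnitaryGroup_matJ_iff {g : GL (Fin 3) ℂ} :
    g ∈ formUnitaryGroup matJ ↔ ∀ i j,
      conj (g 2 i) * g 0 j + conj (g 1 i) * g 1 j + conj (g 0 i) * g 2 j = matJ i j := by
  change (g : Matrix (Fin 3) (Fin 3) ℂ)ᴴ * matJ * g = matJ ↔ _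
  rw [← Matrix.ext_iff]
  simp [mul_apply, Fin.sum_univ_three, matJ]

lemma inv_apply_of_mem_formUnitaryGroup {g : GL (Fin 3) ℂ} (hg : g ∈ formUnitaryGroup matJ)
    (i j : Fin 3) : g⁻¹ i j = conj (g j.rev i.rev) := by
  have hJ : matJ * matJ = 1 := by
    ext i j
    fin_cases i <;> fin_cases j <;> simp [matJ]
  have hinv : (↑g⁻¹ : Matrix (Fin 3) (Fin 3) ℂ) =
      matJ * (g : Matrix (Fin 3) (Fin 3) ℂ)ᴴ * matJ := by
    rw [coe_units_inv]
    refine Matrix.inv_eq_left_inv ?_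
    rw [Matrix.mul_assoc, Matrix.mul_assoc, ← Matrix.mul_assoc _ matJ,
      show (g : Matrix (Fin 3) (Fin 3) ℂ)ᴴ * matJ * g = matJ from hg, hJ]
  rw [hinv]
  fin_cases i <;> fin_cases j <;> simp [mul_apply, vecMul_eq_sum, Fin.sum_univ_three, matJ, Fin.rev]

/-- `Γ_s^(11)` as a subgroup of `GL₃(ℂ)`. -/
def sisterGroup : Subgroup (GL (Fin 3) ℂ) where
  toSubmonoid := (formUnitaryGroup matJ).toSubmonoid ⊓
    sisterOrder.toSubmonoid.comap (Units.coeHom _)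
  inv_mem' := by
    rintro g ⟨hgU : g ∈ formUnitaryGroup matJ, hgO⟩
    refine ⟨(formUnitaryGroup matJ).inv_mem hgU, fun i j => ?_⟩
    have hrev : conj (isq11 ^ sisterExponent i j * g j.rev i.rev) ∈ integers :=
      conj_mem_integers (sisterExponent_rev i j ▸ hgO j.rev i.rev)
    rw [map_mul, map_zpow₀, conj_isq11] at hrev
    change _ * g⁻¹ i j ∈ integers
    rw [inv_apply_of_mem_formUnitaryGroup hgU]
    rcases Int.even_or_odd (sisterExponent i j) with he | he
    · rwa [he.neg_zpow] at hrev
    · rwa [he.neg_zpow, neg_mul, neg_mem_iff] at hrev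

lemma mem_sisterGroup_iff {g : GL (Fin 3) ℂ} :
    g ∈ sisterGroup ↔ GammaS11 (g : Matrix (Fin 3) (Fin 3) ℂ) := by
  change _ = matJ ∧ (g : Matrix (Fin 3) (Fin 3) ℂ) ∈ sisterOrder ↔ _
  rw [mem_sisterOrder_iff]
  simp only [GammaS11, inU21, g.isUnit, true_and, mem_integers_iff]

lemma neg_one_mem_sisterGroup : -1 ∈ sisterGroup :=
  ⟨show _ = _ by simp, sisterOrder.neg_mem (one_mem sisterOrder)⟩

/-! ### Heisenberg translations -/

/-- The complex coordinate of the point `(z, t)` of the Heisenberg group in Siegel coordinates; the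
vertical coordinate `t` is scaled so that `T` is translation by `(0, 1)`. -/
def siegelCoord (z : ℂ) (t : ℝ) : ℂ := -normSq z / 2 + t * (isq11 / 11)

lemma isq11_mul_siegelCoord (z : ℂ) (t : ℝ) :
    isq11 * siegelCoord z t = -((t : ℂ) + (normSq z / 2 : ℝ) * isq11) := by
  push_cast [siegelCoord]
  linear_combination (t / 11 : ℂ) * isq11_mul_self

lemma normSq_isq11_mul_siegelCoord (z : ℂ) (t : ℝ) :
    normSq (isq11 * siegelCoord z t) = t ^ 2 + 11 / 4 * normSq z ^ 2 := by
  rw [isq11_mul_siegelCoord, Complex.normSq_neg, normSq_add_mul_isq11]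
  ring

lemma exists_siegelCoord_eq {p z : ℂ} (h : conj p + conj z * z + p = 0) :
    ∃ t, siegelCoord z t = p := by
  obtain ⟨x, y, rfl⟩ := exists_eq_add_mul_isq11 p
  refine ⟨11 * y, ?_⟩
  simp only [map_add, map_mul, Complex.conj_ofReal, conj_isq11, Complex.conj_mul',
    ← Complex.normSq_eq_norm_sq, ← Complex.ofReal_pow] at h
  push_cast [siegelCoord]
  linear_combination -h / 2

/-- Translation by `(z, t)` in the Heisenberg group of unipotent upper triangular elements of
`U(2,1;J)`. -/
def heisenberg (z : ℂ) (t : ℝ) : GL (Fin 3) ℂ :=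
  .mkOfDetNeZero !![1, -conj z, siegelCoord z t; 0, 1, z; 0, 0, 1] (by simp [det_fin_three])

lemma coe_heisenberg (z : ℂ) (t : ℝ) : (heisenberg z t : Matrix (Fin 3) (Fin 3) ℂ) =
    !![1, -conj z, siegelCoord z t; 0, 1, z; 0, 0, 1] := rfl

lemma heisenberg_mul (z w : ℂ) (s t : ℝ) :
    heisenberg z s * heisenberg w t = heisenberg (z + w) (s + t - √11 * (conj z * w).im) := by
  have hcoord : siegelCoord (z + w) (s + t - √11 * (conj z * w).im) =
      siegelCoord w t + -(conj z * w) + siegelCoord z s := by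
    have him : conj z * w - z * conj w = (2 * (conj z * w).im : ℝ) * Complex.I := by
      simpa using Complex.sub_conj (conj z * w)
    have hI : isq11 * (√11 : ℝ) = 11 * Complex.I := by
      rw [isq11, mul_assoc, ← Complex.ofReal_mul, sqrt_eleven_mul_self, mul_comm,
        Complex.ofReal_ofNat]
    simp only [siegelCoord, Complex.normSq_eq_conj_mul_self, map_add, Complex.ofReal_sub,
      Complex.ofReal_add, Complex.ofReal_mul, Complex.ofReal_ofNat] at him ⊢
    linear_combination him / 2 - (conj z * w).im / 11 * hI
  apply Units.ext
  rw [GeneralLinearGroup.coe_mul, coe_heisenberg, coe_heisenberg, coe_heisenberg, hcoord]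
  simp [add_comm, add_left_comm]

lemma heisenberg_zero_zero : heisenberg 0 0 = 1 := by
  apply Units.ext
  ext i j
  fin_cases i <;> fin_cases j <;> simp [coe_heisenberg, siegelCoord]

lemma heisenberg_inv (z : ℂ) (t : ℝ) : (heisenberg z t)⁻¹ = heisenberg (-z) (-t) := by
  refine inv_eq_of_mul_eq_one_right ?_
  rw [heisenberg_mul, ← heisenberg_zero_zero]
  congr 1
  · simp
  · simp [mul_comm]

/-- Vertical translation as a homomorphism from `ℝ`. -/
def verticalTranslation : Multiplicative ℝ →* GL (Fin 3) ℂ where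
  toFun t := heisenberg 0 t.toAdd
  map_one' := heisenberg_zero_zero
  map_mul' s t := by simp [heisenberg_mul]

/-- The horizontal translations which lift to a Heisenberg translation in `Γ`. -/
def horizontalTranslations (Γ : Subgroup (GL (Fin 3) ℂ)) : AddSubgroup ℂ where
  carrier := {z | ∃ t, heisenberg z t ∈ Γ}
  zero_mem' := ⟨0, heisenberg_zero_zero ▸ one_mem Γ⟩
  add_mem' := fun ⟨_, hs⟩ ⟨_, ht⟩ => ⟨_, heisenberg_mul _ _ _ _ ▸ mul_mem hs ht⟩
  neg_mem' := fun ⟨_, ht⟩ => ⟨_, heisenberg_inv _ _ ▸ inv_mem ht⟩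

lemma heisenberg_mem_formUnitaryGroup (z : ℂ) (t : ℝ) : heisenberg z t ∈ formUnitaryGroup matJ := by
  have hp : siegelCoord z t + conj z * z + conj (siegelCoord z t) = 0 := by
    simp only [siegelCoord, Complex.normSq_eq_conj_mul_self, map_add, map_mul, map_neg, map_div₀,
      map_ofNat, Complex.conj_conj, Complex.conj_ofReal, conj_isq11]
    ring
  rw [mem_formUnitaryGroup_matJ_iff]
  intro i j
  fin_cases i <;> fin_cases j <;> simp [coe_heisenberg, matJ, hp]

lemma heisenberg_mem_sisterGroup_iff {z : ℂ} {t : ℝ} :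
    heisenberg z t ∈ sisterGroup ↔ z ∈ integers ∧ isq11 * siegelCoord z t ∈ integers := by
  have hO : heisenberg z t ∈ sisterGroup ↔
      (heisenberg z t : Matrix (Fin 3) (Fin 3) ℂ) ∈ sisterOrder :=
    and_iff_right (heisenberg_mem_formUnitaryGroup z t)
  have hconj : conj z ∈ integers ↔ z ∈ integers :=
    ⟨fun h => Complex.conj_conj z ▸ conj_mem_integers h, conj_mem_integers⟩
  rw [hO, mem_sisterOrder_iff]
  simp [coe_heisenberg, hconj]

/-- The inversion `I₀` as an element of `GL₃(ℂ)`. -/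
def inversion : GL (Fin 3) ℂ :=
  .mkOfDetNeZero I₀ (by simp [I₀, det_fin_three])

/-- The reflection `R₁` as an element of `GL₃(ℂ)`. -/
def reflection : GL (Fin 3) ℂ :=
  .mkOfDetNeZero R₁ (by simp [R₁, det_fin_three])

lemma coe_inversion : (inversion : Matrix (Fin 3) (Fin 3) ℂ) =
    !![0, 0, isq11 / 11; 0, 1, 0; isq11, 0, 0] := by
  rw [← I_div_sqrt_eleven]
  rfl

lemma coe_reflection : (reflection : Matrix (Fin 3) (Fin 3) ℂ) =
    !![1, 0, 0; 0, -1, 0; 0, 0, 1] := rfl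

lemma reflection_mul_heisenberg (z : ℂ) (t : ℝ) :
    reflection * heisenberg z t = heisenberg (-z) t * reflection := by
  apply Units.ext
  simp [coe_reflection, coe_heisenberg, siegelCoord]

lemma mul_reflection_apply_two_two (g : GL (Fin 3) ℂ) : (g * reflection) 2 2 = g 2 2 := by
  simp [coe_reflection, mul_apply, Fin.sum_univ_three]

lemma mul_inversion_row (g : GL (Fin 3) ℂ) (i : Fin 3) :
    (g * inversion) i = ![isq11 * g i 2, g i 1, isq11 / 11 * g i 0] := by
  ext j
  fin_cases j <;> simp [coe_inversion, mul_apply, Fin.sum_univ_three, mul_comm]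

lemma inversion_mul_heisenberg_row (z : ℂ) (t : ℝ) :
    (inversion * heisenberg z t) 2 = ![isq11, -isq11 * conj z, isq11 * siegelCoord z t] := by
  ext j
  fin_cases j <;> simp [coe_inversion, coe_heisenberg, mul_apply, Fin.sum_univ_three]

lemma coe_heisenberg_one_mul_reflection :
    ((heisenberg 1 (1 / 2) * reflection : GL (Fin 3) ℂ) : Matrix (Fin 3) (Fin 3) ℂ) = R₂ := by
  have h : Complex.I * ω₁₁ / (√11 : ℝ) = siegelCoord 1 (1 / 2) := by
    rw [mul_div_right_comm, I_div_sqrt_eleven]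
    push_cast [siegelCoord, ω₁₁_eq, map_one]
    linear_combination isq11_mul_self / 22
  rw [R₂, h]
  simp [coe_heisenberg, coe_reflection]

lemma coe_heisenberg_ω₁₁_mul_reflection :
    ((heisenberg ω₁₁ (1 / 2) * reflection : GL (Fin 3) ℂ) : Matrix (Fin 3) (Fin 3) ℂ) = R₃ := by
  have h : -3 / 2 + Complex.I / (2 * (√11 : ℝ)) = siegelCoord ω₁₁ (1 / 2) := by
    rw [mul_comm, ← div_div, I_div_sqrt_eleven, siegelCoord, normSq_ω₁₁]
    push_cast
    ring
  rw [R₃, h]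
  simp [coe_heisenberg, coe_reflection]

lemma coe_heisenberg_zero_one : (heisenberg 0 1 : Matrix (Fin 3) (Fin 3) ℂ) = T := by
  simp [coe_heisenberg, T, siegelCoord, I_div_sqrt_eleven]

lemma inversion_mem_sisterGroup : inversion ∈ sisterGroup := by
  refine ⟨mem_formUnitaryGroup_matJ_iff.2 fun i j => ?_, mem_sisterOrder_iff.2 ?_⟩
  · fin_cases i <;> fin_cases j <;>
      simp [coe_inversion, matJ, conj_isq11, map_ofNat, mul_div_assoc', div_mul_eq_mul_div,
        isq11_mul_self]
  · simp [coe_inversion, isq11_ne_zero, mul_div_assoc', isq11_mul_self]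

lemma reflection_mem_sisterGroup : reflection ∈ sisterGroup := by
  refine ⟨mem_formUnitaryGroup_matJ_iff.2 fun i j => ?_, mem_sisterOrder_iff.2 ?_⟩
  · fin_cases i <;> fin_cases j <;> simp [coe_reflection, matJ]
  · simp [coe_reflection]

/-! ### The stabiliser of infinity -/

/-- The generators `I₀, R₁, R₂, R₃, T` as elements of `GL₃(ℂ)`. -/
def generators : Set (GL (Fin 3) ℂ) :=
  {inversion, reflection, heisenberg 1 (1 / 2) * reflection, heisenberg ω₁₁ (1 / 2) * reflection,
    heisenberg 0 1}

lemma coe_mem_of_mem_generators {g : GL (Fin 3) ℂ} (hg : g ∈ generators) :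
    (g : Matrix (Fin 3) (Fin 3) ℂ) ∈ ({I₀, R₁, R₂, R₃, T} : Set (Matrix (Fin 3) (Fin 3) ℂ)) := by
  rcases hg with rfl | rfl | rfl | rfl | rfl
  · exact Or.inl rfl
  · exact Or.inr (Or.inl rfl)
  · exact Or.inr (Or.inr (Or.inl coe_heisenberg_one_mul_reflection))
  · exact Or.inr (Or.inr (Or.inr (Or.inl coe_heisenberg_ω₁₁_mul_reflection)))
  · exact Or.inr (Or.inr (Or.inr (Or.inr coe_heisenberg_zero_one)))

/-- The subgroup of `GL₃(ℂ)` generated by `-1` and `I₀, R₁, R₂, R₃, T`. -/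
def generatedGroup : Subgroup (GL (Fin 3) ℂ) := Subgroup.closure (insert (-1) generators)

lemma neg_one_mem_generatedGroup : -1 ∈ generatedGroup :=
  Subgroup.subset_closure (Set.mem_insert _ _)

lemma mem_generatedGroup_of_mem_generators {g : GL (Fin 3) ℂ} (hg : g ∈ generators) :
    g ∈ generatedGroup :=
  Subgroup.subset_closure (Set.mem_insert_of_mem _ hg)

lemma inversion_mem_generatedGroup : inversion ∈ generatedGroup :=
  mem_generatedGroup_of_mem_generators (by simp [generators])

lemma reflection_mem_generatedGroup : reflection ∈ generatedGroup :=
  mem_generatedGroup_of_mem_generators (by simp [generators])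

lemma heisenberg_one_mem_generatedGroup : heisenberg 1 (1 / 2) ∈ generatedGroup :=
  (generatedGroup.mul_mem_cancel_right reflection_mem_generatedGroup).1 <|
    mem_generatedGroup_of_mem_generators (by simp [generators])

lemma heisenberg_ω₁₁_mem_generatedGroup : heisenberg ω₁₁ (1 / 2) ∈ generatedGroup :=
  (generatedGroup.mul_mem_cancel_right reflection_mem_generatedGroup).1 <|
    mem_generatedGroup_of_mem_generators (by simp [generators])

lemma heisenberg_one_mem_sisterGroup : heisenberg 1 (1 / 2) ∈ sisterGroup := by
  refine heisenberg_mem_sisterGroup_iff.2 ⟨one_mem _, 0, -1, ?_⟩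
  rw [isq11_mul_siegelCoord, ω₁₁_eq]
  push_cast [map_one]
  ring

lemma heisenberg_ω₁₁_mem_sisterGroup : heisenberg ω₁₁ (1 / 2) ∈ sisterGroup := by
  refine heisenberg_mem_sisterGroup_iff.2 ⟨ω₁₁_mem_integers, 1, -3, ?_⟩
  rw [isq11_mul_siegelCoord, normSq_ω₁₁, ω₁₁_eq]
  push_cast
  ring

lemma heisenberg_zero_one_mem_sisterGroup : heisenberg 0 1 ∈ sisterGroup := by
  refine heisenberg_mem_sisterGroup_iff.2 ⟨zero_mem _, -1, 0, ?_⟩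
  simp [isq11_mul_siegelCoord]

lemma generatedGroup_le_sisterGroup : generatedGroup ≤ sisterGroup := by
  refine (Subgroup.closure_le _).2 ?_
  have hρ := reflection_mem_sisterGroup
  rintro _ (rfl | rfl | rfl | rfl | rfl | rfl)
  · exact neg_one_mem_sisterGroup
  · exact inversion_mem_sisterGroup
  · exact hρ
  · exact mul_mem heisenberg_one_mem_sisterGroup hρ
  · exact mul_mem heisenberg_ω₁₁_mem_sisterGroup hρ
  · exact heisenberg_zero_one_mem_sisterGroup

lemma heisenberg_zero_intCast_mem_generatedGroup (k : ℤ) : heisenberg 0 k ∈ generatedGroup := by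
  have hT : heisenberg 0 1 ∈ generatedGroup :=
    mem_generatedGroup_of_mem_generators (by simp [generators])
  have hpow : verticalTranslation (Multiplicative.ofAdd 1) ^ k = heisenberg 0 k := by
    rw [← map_zpow, ← ofAdd_zsmul, zsmul_one]
    rfl
  exact hpow ▸ zpow_mem hT k

lemma exists_heisenberg_mem_generatedGroup {z : ℂ} (hz : z ∈ integers) :
    ∃ t, heisenberg z t ∈ generatedGroup := by
  obtain ⟨a, b, rfl⟩ := hz
  have h₁ : 1 ∈ horizontalTranslations generatedGroup := ⟨_, heisenberg_one_mem_generatedGroup⟩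
  have h₂ : ω₁₁ ∈ horizontalTranslations generatedGroup := ⟨_, heisenberg_ω₁₁_mem_generatedGroup⟩
  have h := add_mem (zsmul_mem h₁ a) (zsmul_mem h₂ b)
  rwa [zsmul_one, zsmul_eq_mul] at h

lemma heisenberg_mem_generatedGroup {z : ℂ} {t : ℝ} (h : heisenberg z t ∈ sisterGroup) :
    heisenberg z t ∈ generatedGroup := by
  obtain ⟨s, hs⟩ := exists_heisenberg_mem_generatedGroup (heisenberg_mem_sisterGroup_iff.1 h).1
  have hmul : heisenberg z s * heisenberg 0 (t - s) = heisenberg z t := by simp [heisenberg_mul]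
  have hvert : heisenberg 0 (t - s) ∈ sisterGroup :=
    (sisterGroup.mul_mem_cancel_left (generatedGroup_le_sisterGroup hs)).1 (hmul ▸ h)
  obtain ⟨k, hk⟩ : ∃ k : ℤ, t - s = k := by
    refine exists_int_eq_of_ofReal_mem_integers (neg_mem_iff.1 ?_)
    simpa [isq11_mul_siegelCoord] using (heisenberg_mem_sisterGroup_iff.1 hvert).2
  exact hmul ▸ mul_mem hs (hk ▸ heisenberg_zero_intCast_mem_generatedGroup k)

lemma upperTriangular_of_apply_two_zero_eq_zero {g : GL (Fin 3) ℂ} (hg : g ∈ formUnitaryGroup matJ)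
    (h₂₀ : g 2 0 = 0) : g 1 0 = 0 ∧ g 2 1 = 0 ∧ conj (g 0 0) * g 2 2 = 1 ∧
      conj (g 1 1) * g 1 1 = 1 := by
  rw [mem_formUnitaryGroup_matJ_iff] at hg
  have h₁₀ : g 1 0 = 0 := by simpa [h₂₀, matJ] using hg 0 0
  have hdiag : conj (g 0 0) * g 2 2 = 1 := by simpa [h₂₀, h₁₀, matJ] using hg 0 2
  have h₀₀ : g 0 0 ≠ 0 := fun h => by simp [h] at hdiag
  have h₂₁ : g 2 1 = 0 := by simpa [h₂₀, h₁₀, matJ, h₀₀] using hg 0 1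
  exact ⟨h₁₀, h₂₁, hdiag, by simpa [h₂₁, matJ] using hg 1 1⟩

lemma exists_eq_heisenberg {g : GL (Fin 3) ℂ} (hg : g ∈ formUnitaryGroup matJ) (h₀₀ : g 0 0 = 1)
    (h₁₁ : g 1 1 = 1) (h₂₀ : g 2 0 = 0) : ∃ z t, g = heisenberg z t := by
  obtain ⟨h₁₀, h₂₁, h₂₂, -⟩ := upperTriangular_of_apply_two_zero_eq_zero hg h₂₀
  rw [h₀₀, map_one, one_mul] at h₂₂
  rw [mem_formUnitaryGroup_matJ_iff] at hg
  have hrow₁ : g 0 1 + conj (g 1 2) = 0 := by simpa [matJ, h₂₂, h₁₁, h₂₁] using hg 2 1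
  have hrow₂ : g 0 2 + conj (g 1 2) * g 1 2 + conj (g 0 2) = 0 := by
    simpa [matJ, h₂₂] using hg 2 2
  obtain ⟨t, ht⟩ : ∃ t, siegelCoord (g 1 2) t = g 0 2 :=
    exists_siegelCoord_eq (by linear_combination hrow₂)
  refine ⟨g 1 2, t, Units.ext ?_⟩
  ext i j
  fin_cases i <;> fin_cases j <;> simp [coe_heisenberg, eq_neg_of_add_eq_zero_left hrow₁, *]

lemma mem_generatedGroup_of_apply_two_zero_eq_zero {g : GL (Fin 3) ℂ} (hg : g ∈ sisterGroup)
    (h₂₀ : g 2 0 = 0) : g ∈ generatedGroup := by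
  have unipotent {g : GL (Fin 3) ℂ} (hg : g ∈ sisterGroup) (h₀₀ : g 0 0 = 1) (h₁₁ : g 1 1 = 1)
      (h₂₀ : g 2 0 = 0) : g ∈ generatedGroup := by
    obtain ⟨z, t, rfl⟩ := exists_eq_heisenberg hg.1 h₀₀ h₁₁ h₂₀
    exact heisenberg_mem_generatedGroup hg
  have normalized {g : GL (Fin 3) ℂ} (hg : g ∈ sisterGroup) (h₀₀ : g 0 0 = 1) (h₂₀ : g 2 0 = 0) :
      g ∈ generatedGroup := by
    obtain ⟨-, -, -, hmid⟩ := upperTriangular_of_apply_two_zero_eq_zero hg.1 h₂₀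
    obtain ⟨-, -, i₁₁, -⟩ := mem_sisterOrder_iff.1 hg.2
    rcases eq_one_or_eq_neg_one_of_mul_eq_one i₁₁ (conj_mem_integers i₁₁) (by rwa [mul_comm])
      with (h₁₁ : g 1 1 = 1) | (h₁₁ : g 1 1 = -1)
    · exact unipotent hg h₀₀ h₁₁ h₂₀
    · refine (generatedGroup.mul_mem_cancel_left reflection_mem_generatedGroup).1 ?_
      refine unipotent (mul_mem reflection_mem_sisterGroup hg) ?_ ?_ ?_ <;>
        simp [coe_reflection, mul_apply, Fin.sum_univ_three, *]
  obtain ⟨-, -, hdiag, -⟩ := upperTriangular_of_apply_two_zero_eq_zero hg.1 h₂₀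
  obtain ⟨i₀₀, -, -, -, i₂₂, -⟩ := mem_sisterOrder_iff.1 hg.2
  rcases eq_one_or_eq_neg_one_of_mul_eq_one (conj_mem_integers i₀₀) i₂₂ hdiag with h₀₀ | h₀₀
  · exact normalized hg (by simpa using congrArg conj h₀₀) h₂₀
  · refine (generatedGroup.mul_mem_cancel_left neg_one_mem_generatedGroup).1 ?_
    refine normalized (mul_mem neg_one_mem_sisterGroup hg) ?_ (by simp [h₂₀])
    simpa [neg_eq_iff_eq_neg] using congrArg conj h₀₀

/-! ### Covering the boundary by isometric spheres -/

/-- Every boundary point `(z, t)` over `z` lies inside the isometric sphere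
`normSq ((h * heisenberg z t) 2 2) = 1` of some element `h` of the generated group. -/
def IsCovered (z : ℂ) : Prop :=
  ∀ t : ℝ, ∃ h ∈ generatedGroup, normSq ((h * heisenberg z t) 2 2) < 1

lemma IsCovered.of_neg {z : ℂ} (h : IsCovered (-z)) : IsCovered z := fun t => by
  obtain ⟨g, hg, hlt⟩ := h t
  refine ⟨g * reflection, mul_mem hg reflection_mem_generatedGroup, ?_⟩
  rwa [mul_assoc, reflection_mul_heisenberg, ← mul_assoc, mul_reflection_apply_two_two]

lemma IsCovered.of_add {z w : ℂ} (hw : w ∈ integers) (h : IsCovered (w + z)) : IsCovered z :=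
  fun t => by
    obtain ⟨s, hs⟩ := exists_heisenberg_mem_generatedGroup hw
    obtain ⟨g, hg, hlt⟩ := h (s + t - √11 * (conj w * z).im)
    exact ⟨g * heisenberg w s, mul_mem hg hs, by rwa [mul_assoc, heisenberg_mul]⟩

-- Vertical translations move the point to height at most `1 / 2` relative to the sphere's centre.
lemma isCovered_of_row_eq_smul {g : GL (Fin 3) ℂ} (hg : g ∈ generatedGroup) {c w z : ℂ} {s : ℝ}
    (hrow : g 2 = c • (inversion * heisenberg w s) 2)
    (hlt : normSq c * (1 / 4 + 11 / 4 * normSq (w + z) ^ 2) < 1) : IsCovered z := fun t => by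
  set u := s + t - √11 * (conj w * z).im with hu
  have hmul : heisenberg w s * (heisenberg 0 (-round u : ℤ) * heisenberg z t) =
      heisenberg (w + z) (u - round u) := by
    rw [heisenberg_mul, heisenberg_mul]
    congr 1
    · simp
    · rw [map_zero, zero_mul, Complex.zero_im, zero_add]
      push_cast
      linear_combination -hu
  have hround : (u - round u) ^ 2 ≤ 1 / 4 := by
    have := sq_le_sq' (abs_le.1 (abs_sub_round u)).1 (abs_le.1 (abs_sub_round u)).2
    linarith
  refine ⟨_, mul_mem hg (heisenberg_zero_intCast_mem_generatedGroup (-round u)), ?_⟩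
  rw [mul_assoc, GeneralLinearGroup.coe_mul, mul_apply_eq_of_row_eq_smul hrow,
    ← GeneralLinearGroup.coe_mul, mul_assoc, hmul, inversion_mul_heisenberg_row]
  change normSq (c * (isq11 * siegelCoord _ _)) < 1
  rw [map_mul, normSq_isq11_mul_siegelCoord]
  refine lt_of_le_of_lt ?_ hlt
  gcongr
  exact Complex.normSq_nonneg c

lemma isCovered_of_normSq_le {z : ℂ} (h : normSq z ≤ 0.522) : IsCovered z := by
  refine isCovered_of_row_eq_smul inversion_mem_generatedGroup (c := 1) (w := 0) (s := 0) ?_ ?_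
  · rw [heisenberg_zero_zero, mul_one, one_smul]
  · rw [zero_add, map_one]
    nlinarith [Complex.normSq_nonneg z]

lemma heisenberg_neg_one_mem_generatedGroup {σ : ℤ} (hσ : σ = 1 ∨ σ = -1) :
    heisenberg (-1) (-σ / 2) ∈ generatedGroup := by
  have h := inv_mem heisenberg_one_mem_generatedGroup
  rw [heisenberg_inv] at h
  rcases hσ with rfl | rfl
  · convert h using 2
    norm_num
  · convert mul_mem h (heisenberg_zero_intCast_mem_generatedGroup 1) using 1
    rw [heisenberg_mul]
    congr 1 <;> norm_num

lemma normSq_intCast_sub_isq11 {σ : ℤ} (hσ : σ = 1 ∨ σ = -1) : normSq (σ - isq11) = 12 := by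
  have h : (σ - isq11 : ℂ) = (σ : ℝ) + (-1 : ℝ) * isq11 := by
    push_cast
    ring
  rw [h, normSq_add_mul_isq11]
  rcases hσ with rfl | rfl <;> norm_num

lemma inversion_mul_heisenberg_mul_inversion_row {σ : ℤ} (hσ : σ = 1 ∨ σ = -1) :
    (inversion * heisenberg (-1) (-σ / 2) * inversion) 2 =
      ((σ - isq11) / 2) • (inversion * heisenberg (-((σ - isq11) / 6)) (σ / 6)) 2 := by
  have hσ_sq : (σ : ℂ) ^ 2 = 1 := by rcases hσ with rfl | rfl <;> norm_num
  have hleft : isq11 * siegelCoord (-1) (-σ / 2) = (σ - isq11) / 2 := by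
    rw [isq11_mul_siegelCoord, Complex.normSq_neg, map_one]
    push_cast
    ring
  have hright : isq11 * siegelCoord (-((σ - isq11) / 6)) (σ / 6) = -((σ + isq11) / 6) := by
    rw [isq11_mul_siegelCoord, Complex.normSq_neg, map_div₀, normSq_intCast_sub_isq11 hσ,
      Complex.normSq_ofNat]
    push_cast
    ring
  have hconj : conj (-((σ - isq11) / 6)) = -((σ + isq11) / 6) := by
    rw [map_neg, map_div₀, map_sub, conj_isq11, map_intCast, map_ofNat, sub_neg_eq_add]
  rw [mul_inversion_row, inversion_mul_heisenberg_row, inversion_mul_heisenberg_row, hleft, hright,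
    hconj, map_neg, map_one]
  ext j
  fin_cases j
  · exact mul_comm _ _
  · change -isq11 * -1 = (σ - isq11) / 2 * (-isq11 * -((σ + isq11) / 6))
    linear_combination isq11 / 12 * (isq11_mul_self - hσ_sq)
  · change isq11 / 11 * isq11 = (σ - isq11) / 2 * -((σ + isq11) / 6)
    linear_combination isq11_mul_self / 132 + hσ_sq / 12

-- The isometric sphere of `I₀ N(-1, -σ/2) I₀` is centred over `(σ - i√11) / 6`, with `normSq` of
-- its bottom left entry three times that of `I₀`.
lemma isCovered_of_normSq_sub_le {σ : ℤ} (hσ : σ = 1 ∨ σ = -1) {z : ℂ}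
    (h : normSq (z - (σ - isq11) / 6) ≤ 0.174) : IsCovered z := by
  have hg : inversion * heisenberg (-1) (-σ / 2) * inversion ∈ generatedGroup :=
    mul_mem (mul_mem inversion_mem_generatedGroup (heisenberg_neg_one_mem_generatedGroup hσ))
      inversion_mem_generatedGroup
  refine isCovered_of_row_eq_smul hg (inversion_mul_heisenberg_mul_inversion_row hσ) ?_
  rw [map_div₀, normSq_intCast_sub_isq11 hσ, Complex.normSq_ofNat, neg_add_eq_sub]
  nlinarith [Complex.normSq_nonneg (z - (σ - isq11) / 6)]

lemma exists_bound_of_mem_box {x y : ℝ} (hx₀ : 0 ≤ x) (hx : x ≤ 1 / 2) (hy : -(1 / 4) ≤ y)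
    (hy₀ : y ≤ 0) : x ^ 2 + 11 * y ^ 2 ≤ 0.522 ∨ (x - 1 / 6) ^ 2 + 11 * (y + 1 / 6) ^ 2 ≤ 0.174 ∨
      (1 / 3 - x) ^ 2 + 11 * (-(1 / 3) - y) ^ 2 ≤ 0.174 := by
  rcases le_or_gt (-0.15) y with hy' | hy'
  · left; nlinarith
  · rcases le_or_gt x 0.47 with hx' | hx'
    · right; left; nlinarith
    · rcases le_or_gt (-0.23) y with hy'' | hy''
      · right; left; nlinarith
      · right; right; nlinarith

lemma isCovered_of_mem_box {σ : ℤ} (hσ : σ = 1 ∨ σ = -1) {x y : ℝ} (hx₀ : 0 ≤ x)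
    (hx : x ≤ 1 / 2) (hy : -(1 / 4) ≤ y) (hy₀ : y ≤ 0) :
    IsCovered ((σ * x : ℝ) + y * isq11) := by
  have hσ_sq : (σ : ℝ) ^ 2 = 1 := by rcases hσ with rfl | rfl <;> norm_num
  have hsub (x y : ℝ) : normSq (((σ * x : ℝ) + y * isq11) - (σ - isq11) / 6) =
      (x - 1 / 6) ^ 2 + 11 * (y + 1 / 6) ^ 2 := by
    have h : ((σ * x : ℝ) + y * isq11) - (σ - isq11) / 6 =
        (σ * (x - 1 / 6) : ℝ) + (y + 1 / 6 : ℝ) * isq11 := by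
      push_cast
      ring
    rw [h, normSq_add_mul_isq11]
    linear_combination (x - 1 / 6) ^ 2 * hσ_sq
  rcases exists_bound_of_mem_box hx₀ hx hy hy₀ with h | h | h
  · refine isCovered_of_normSq_le ?_
    rwa [normSq_add_mul_isq11, mul_pow, hσ_sq, one_mul]
  · exact isCovered_of_normSq_sub_le hσ (by rwa [hsub])
  · have hmem : (σ - isq11) / 2 ∈ integers := by
      rcases hσ with rfl | rfl
      · exact ⟨1, -1, by push_cast [ω₁₁_eq]; ring⟩
      · exact ⟨0, -1, by push_cast [ω₁₁_eq]; ring⟩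
    have hcov : IsCovered ((σ * (1 / 2 - x) : ℝ) + (-(1 / 2) - y : ℝ) * isq11) := by
      refine isCovered_of_normSq_sub_le hσ ?_
      rw [hsub]
      convert h using 3 <;> ring
    refine .of_neg (.of_add hmem ?_)
    convert hcov using 1
    push_cast
    ring

lemma exists_integers_add_eq (z : ℂ) :
    ∃ w ∈ integers, ∃ x y : ℝ, |x| ≤ 1 / 2 ∧ |y| ≤ 1 / 4 ∧ w + z = x + y * isq11 := by
  obtain ⟨x, y, rfl⟩ := exists_eq_add_mul_isq11 z
  set n := round (2 * y)
  set m := round (x - n / 2)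
  refine ⟨_, ⟨-m, -n, rfl⟩, x - n / 2 - m, y - n / 2, abs_sub_round _, ?_, ?_⟩
  · have h := abs_le.1 (abs_sub_round (2 * y))
    exact abs_le.2 ⟨by linarith, by linarith⟩
  · push_cast [ω₁₁_eq]
    ring

lemma isCovered (z : ℂ) : IsCovered z := by
  obtain ⟨w, hw, x, y, hx, hy, hz⟩ := exists_integers_add_eq z
  have lower {x y : ℝ} (hx : |x| ≤ 1 / 2) (hy : -(1 / 4) ≤ y) (hy₀ : y ≤ 0) :
      IsCovered (x + y * isq11) := by
    rcases abs_cases x with ⟨h, -⟩ | ⟨h, -⟩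
    · simpa [h] using isCovered_of_mem_box (Or.inl rfl) (abs_nonneg x) hx hy hy₀
    · simpa [h] using isCovered_of_mem_box (Or.inr rfl) (abs_nonneg x) hx hy hy₀
  refine .of_add hw (hz ▸ ?_)
  rcases le_total y 0 with hy₀ | hy₀
  · exact lower hx (abs_le.1 hy).1 hy₀
  · refine .of_neg ?_
    have h := lower (x := -x) (y := -y) (by rwa [abs_neg]) (neg_le_neg (abs_le.1 hy).2)
      (neg_nonpos.2 hy₀)
    convert h using 1
    push_cast
    ring

/-! ### Descent -/

lemma exists_mul_apply_two_zero_eq {g : GL (Fin 3) ℂ} (hg : g ∈ formUnitaryGroup matJ)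
    (h₂₀ : g 2 0 ≠ 0) : ∃ z t, ∀ h : GL (Fin 3) ℂ,
      (h * g) 2 0 = g 2 0 * (h * heisenberg z t) 2 2 := by
  have hiso : conj (g 2 0) * g 0 0 + conj (g 1 0) * g 1 0 + conj (g 0 0) * g 2 0 = 0 := by
    simpa [matJ] using mem_formUnitaryGroup_matJ_iff.1 hg 0 0
  obtain ⟨t, ht⟩ : ∃ t, siegelCoord (g 1 0 / g 2 0) t = g 0 0 / g 2 0 := by
    refine exists_siegelCoord_eq ?_
    have : conj (g 2 0) ≠ 0 := by simpa using h₂₀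
    rw [map_div₀, map_div₀]
    field_simp
    linear_combination hiso
  have hcol (i : Fin 3) : g i 0 = g 2 0 * heisenberg (g 1 0 / g 2 0) t i 2 := by
    fin_cases i <;> simp [coe_heisenberg, ht, mul_div_cancel₀, h₂₀]
  refine ⟨g 1 0 / g 2 0, t, fun h => ?_⟩
  rw [GeneralLinearGroup.coe_mul, GeneralLinearGroup.coe_mul, mul_apply, mul_apply, Finset.mul_sum]
  exact Finset.sum_congr rfl fun i _ => by rw [hcol i, mul_left_comm]

lemma exists_normSq_mul_apply_two_zero_lt {g : GL (Fin 3) ℂ} (hg : g ∈ formUnitaryGroup matJ)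
    (h₂₀ : g 2 0 ≠ 0) : ∃ h ∈ generatedGroup, normSq ((h * g) 2 0) < normSq (g 2 0) := by
  obtain ⟨z, t, hzt⟩ := exists_mul_apply_two_zero_eq hg h₂₀
  obtain ⟨h, hh, hlt⟩ := isCovered z t
  refine ⟨h, hh, ?_⟩
  rw [hzt, map_mul]
  exact mul_lt_of_lt_one_right (Complex.normSq_pos.2 h₂₀) hlt

theorem generatedGroup_eq_sisterGroup : generatedGroup = sisterGroup := by
  refine le_antisymm generatedGroup_le_sisterGroup fun g hg => ?_
  obtain ⟨n, hn⟩ : ∃ n : ℕ, normSq (g 2 0 / isq11) = n := by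
    obtain ⟨-, -, -, -, -, -, -, h₂₀, -⟩ := mem_sisterOrder_iff.1 hg.2
    exact exists_nat_normSq_eq h₂₀
  induction n using Nat.strong_induction_on generalizing g with
  | _ n ih =>
    by_cases h₂₀ : g 2 0 = 0
    · exact mem_generatedGroup_of_apply_two_zero_eq_zero hg h₂₀
    · obtain ⟨h, hh, hlt⟩ := exists_normSq_mul_apply_two_zero_lt hg.1 h₂₀
      have hhg := mul_mem (generatedGroup_le_sisterGroup hh) hg
      obtain ⟨m, hm⟩ : ∃ m : ℕ, normSq ((h * g) 2 0 / isq11) = m := by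
        obtain ⟨-, -, -, -, -, -, -, h₂₀, -⟩ := mem_sisterOrder_iff.1 hhg.2
        exact exists_nat_normSq_eq h₂₀
      have hmn : m < n := by
        rw [← Nat.cast_lt (α := ℝ), ← hm, ← hn, map_div₀, map_div₀]
        exact div_lt_div_of_pos_right hlt (Complex.normSq_pos.2 isq11_ne_zero)
      exact (generatedGroup.mul_mem_cancel_left hh).1 (ih m hmn _ hhg hm)

lemma exists_list_of_mem_closure_generators {g : GL (Fin 3) ℂ}
    (hg : g ∈ Subgroup.closure generators) : ∃ L : List (Matrix (Fin 3) (Fin 3) ℂ),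
      (∀ A ∈ L, A ∈ ({I₀, R₁, R₂, R₃, T, I₀⁻¹, R₁⁻¹, R₂⁻¹, R₃⁻¹, T⁻¹} :
        Set (Matrix (Fin 3) (Fin 3) ℂ))) ∧ (g : Matrix (Fin 3) (Fin 3) ℂ) = L.prod := by
  rw [← Subgroup.mem_toSubmonoid, Subgroup.closure_toSubmonoid] at hg
  obtain ⟨l, hl, rfl⟩ := Submonoid.exists_list_of_mem_closure hg
  refine ⟨l.map (Units.coeHom _), fun A hA => ?_, map_list_prod (Units.coeHom _) l⟩
  obtain ⟨u, hu, rfl⟩ := List.mem_map.1 hA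
  rcases hl u hu with hu | hu
  · rcases coe_mem_of_mem_generators hu with h | h | h | h | (h : _ = T) <;> simp [h]
  · rw [Units.coeHom_apply, ← inv_inv u, coe_units_inv]
    rcases coe_mem_of_mem_generators hu with h | h | h | h | (h : _ = T) <;> simp [h]

end GammaS11

/-- `Γ_s^(11)` is generated, modulo `±I`, by `I₀, R₁, R₂, R₃, T`. -/
theorem gammaS11_generated (M : Matrix (Fin 3) (Fin 3) ℂ) (hM : GammaS11 M) :
    ∃ (ε : ℂ) (L : List (Matrix (Fin 3) (Fin 3) ℂ)),
      (ε = 1 ∨ ε = -1) ∧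
      (∀ A ∈ L, A ∈ ({I₀, R₁, R₂, R₃, T, I₀⁻¹, R₁⁻¹, R₂⁻¹, R₃⁻¹, T⁻¹} :
        Set (Matrix (Fin 3) (Fin 3) ℂ))) ∧
      M = ε • L.prod := by
  obtain ⟨g, rfl⟩ := hM.1.1
  have hg : g ∈ GammaS11.generatedGroup :=
    GammaS11.generatedGroup_eq_sisterGroup ▸ GammaS11.mem_sisterGroup_iff.2 hM
  rcases mem_closure_insert_neg_one_iff.1 hg with hg | hg
  · obtain ⟨L, hL, hprod⟩ := GammaS11.exists_list_of_mem_closure_generators hg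
    exact ⟨1, L, Or.inl rfl, hL, by rw [one_smul, hprod]⟩
  · obtain ⟨L, hL, hprod⟩ := GammaS11.exists_list_of_mem_closure_generators hg
    exact ⟨-1, L, Or.inr rfl, hL, by rw [neg_one_smul, ← hprod, Units.val_neg, neg_neg]⟩
end
end

section
/- For d ∈ {2,7,11}, let H^(d) = Γ^(d) ∩ Γ_s^(d), regarded as a subgroup of both Γ^(d) and Γ_s^(d). Then H^(2) has index 3 both in Γ^(2) and in Γ_s^(2), and for d ∈ {7,11} the subgroup H^(d) has index d+1 both in Γ^(d) and in Γ_s^(d). In particular Γ^(d) and Γ_s^(d) are commensurable, sharing the common subgroup H^(d) of equal finite index in both. -/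
noncomputable section

open Matrix

/-- `i√d`. -/
def isqd (d : ℕ) : ℂ := Complex.I * (Real.sqrt d : ℂ)

/-- The ℤ-module generator of `O_d` over `ℤ`: `ω_d = (1+i√d)/2` if `d ≡ 3 (mod 4)`,
and `i√d` otherwise. -/
def OdGen (d : ℕ) : ℂ :=
  if d % 4 = 3 then (1 + Complex.I * (Real.sqrt d : ℂ)) / 2
  else Complex.I * (Real.sqrt d : ℂ)

/-- Membership in the ring of integers `O_d`. -/
def inOd (d : ℕ) (z : ℂ) : Prop := ∃ a b : ℤ, z = (a : ℂ) + (b : ℂ) * OdGen d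

/-- The Picard modular group `Γ^(d)` (as a set of matrices). -/
def GammaPd (d : ℕ) : Set (Matrix (Fin 3) (Fin 3) ℂ) :=
  {M | inU21 M ∧ ∀ j k : Fin 3, inOd d (M j k)}

/-- The sister group `Γ_s^(d)` (as a set of matrices). -/
def GammaSd (d : ℕ) : Set (Matrix (Fin 3) (Fin 3) ℂ) :=
  {M | inU21 M ∧ inOd d (M 0 0) ∧ inOd d (M 0 1) ∧ inOd d (M 1 1) ∧ inOd d (M 1 2) ∧
    inOd d (M 2 2) ∧ inOd d (isqd d * M 0 2) ∧ inOd d (M 1 0 / isqd d) ∧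
    inOd d (M 2 0 / isqd d) ∧ inOd d (M 2 1 / isqd d)}

/-- `H^(d) = Γ^(d) ∩ Γ_s^(d)`. -/
def Hd (d : ℕ) : Set (Matrix (Fin 3) (Fin 3) ℂ) := GammaPd d ∩ GammaSd d

/-! Both groups consist of the elements of `U(2,1;J)` lying in a tiled order, and since
`g⁻¹ = J gᴴ J`, each entry of `g⁻¹ h` is a Hermitian product of a column of `g` with a column of
`h`. For prime `d` the element `π = i√d` generates a ramified prime with residue field `𝔽_d`, on
which complex conjugation acts trivially.

Modulo `π` the first column `(a, b, c)` of an element of `Γ` is isotropic, `b² = -2ac`, and the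
element lies in `Γ_s` if and only if `c = 0`. Hence left cosets of `H` in `Γ` correspond to
isotropic lines: for odd `d` these are the points of a conic, parametrised by the slope `b / 2a`,
and for `d = 2` they are the points of the projective line `b = 0`. Dually, an element `g` of `Γ_s`
lies in `Γ` if and only if its `(0, 2)` entry is integral, and the cosets of `H` in `Γ_s` are
classified by the point `(π g₀₂ : g₂₂)` of the projective line over `𝔽_d`. In all cases there are
`d + 1` cosets, represented by a Weyl element and by `d` Heisenberg translations. -/

namespace PicardModular

open scoped MatrixGroups ComplexConjugate Pointwise

/-! ### Counting cosets -/

lemma natCard_leftCosets_eq_relIndex {M : Type*} [Monoid M] (K G : Subgroup Mˣ) :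
    Nat.card {S : Set M // ∃ γ ∈ Units.val '' (G : Set Mˣ),
      S = (γ * ·) '' (Units.val '' (K : Set Mˣ))} = K.relIndex G := by
  let coset (g : G) : {S : Set M // ∃ γ ∈ Units.val '' (G : Set Mˣ),
      S = (γ * ·) '' (Units.val '' (K : Set Mˣ))} :=
    ⟨(((g : Mˣ) : M) * ·) '' (Units.val '' (K : Set Mˣ)), _, ⟨g, g.2, rfl⟩, rfl⟩
  have coset_surjective : Function.Surjective coset := by
    rintro ⟨_, _, ⟨g, hg, rfl⟩, rfl⟩
    exact ⟨⟨g, hg⟩, rfl⟩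
  have coset_val (g : G) : (coset g : Set M) = Units.val '' ((g : Mˣ) • (K : Set Mˣ)) := by
    simp only [coset, ← Set.image_smul, Set.image_image, smul_eq_mul, Units.val_mul]
  have coset_eq_iff (g h : G) : coset g = coset h ↔ g⁻¹ * h ∈ K.subgroupOf G := by
    rw [Subtype.ext_iff, coset_val, coset_val, (Set.image_injective.2 Units.val_injective).eq_iff,
      Subgroup.mem_subgroupOf]
    exact leftCoset_eq_iff K
  exact (Nat.card_congr ((Quotient.congrRight fun g h =>
    QuotientGroup.leftRel_apply.trans (coset_eq_iff g h).symm).trans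
      (Setoid.quotientKerEquivOfSurjective coset coset_surjective))).symm

lemma index_eq_natCard_of_existsUnique {G ι : Type*} [Group G] {K : Subgroup G} (r : ι → G)
    (hr : ∀ g, ∃! i, (r i)⁻¹ * g ∈ K) : K.index = Nat.card ι := by
  refine (Nat.card_eq_of_bijective (fun i => (r i : G ⧸ K)) ?_).symm
  rw [Function.bijective_iff_existsUnique, QuotientGroup.mk_surjective.forall]
  simpa only [QuotientGroup.eq] using hr

lemma existsUnique_option_of_slope {F : Type*} [Field F] {u v : F} (huv : v = 0 → u ≠ 0)
    {p : Option F → Prop} (hnone : p none ↔ v = 0) (hsome : ∀ t, p (some t) ↔ u = t * v) :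
    ∃! i, p i := by
  by_cases hv : v = 0
  · refine ⟨none, hnone.2 hv, ?_⟩
    rintro (_ | t) ht
    · rfl
    · exact absurd (by simpa [hv] using (hsome t).1 ht) (huv hv)
  · refine ⟨some (u / v), (hsome _).2 (div_mul_cancel₀ u hv).symm, ?_⟩
    rintro (_ | t) ht
    · exact absurd (hnone.1 ht) hv
    · rw [(hsome t).1 ht, mul_div_cancel_right₀ t hv]

lemma index_eq_natCard_add_one_of_slope {G F : Type*} [Group G] [Field F] [Finite F]
    {K : Subgroup G} (w : G) (n : F → G)
    (h : ∀ g, ∃ u v : F, (v = 0 → u ≠ 0) ∧ (w⁻¹ * g ∈ K ↔ v = 0) ∧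
      ∀ t, (n t)⁻¹ * g ∈ K ↔ u = t * v) :
    K.index = Nat.card F + 1 := by
  rw [← Finite.card_option]
  refine index_eq_natCard_of_existsUnique (fun i => i.elim w n) fun g => ?_
  obtain ⟨u, v, huv, hw, hn⟩ := h g
  exact existsUnique_option_of_slope huv hw hn

/-! ### Reduction modulo `i√d` in `O_d` -/

lemma conj_isqd (d : ℕ) : conj (isqd d) = -isqd d := by simp [isqd]

lemma isqd_ne_zero (d : ℕ) [NeZero d] : isqd d ≠ 0 := by simp [isqd, NeZero.ne d]

lemma isqd_mul_self (d : ℕ) : isqd d * isqd d = -d := by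
  rw [isqd, mul_mul_mul_comm, Complex.I_mul_I, ← Complex.ofReal_mul,
    Real.mul_self_sqrt d.cast_nonneg, Complex.ofReal_natCast, neg_one_mul]

lemma OdGen_eq_isqd {d : ℕ} (hd : d % 4 ≠ 3) : OdGen d = isqd d := by
  rw [OdGen, if_neg hd, isqd]

lemma two_mul_OdGen {d : ℕ} (hd : d % 4 = 3) : 2 * OdGen d = 1 + isqd d := by
  rw [OdGen, if_pos hd, isqd, mul_div_cancel₀ _ two_ne_zero]

lemma exists_conj_OdGen_and_sq_OdGen (d : ℕ) :
    ∃ t n : ℤ, conj (OdGen d) = t - OdGen d ∧ OdGen d * OdGen d = t * OdGen d - n := by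
  by_cases hd : d % 4 = 3
  · have h := two_mul_OdGen hd
    obtain ⟨q, rfl⟩ : ∃ q, d = 4 * q + 3 := ⟨d / 4, by lia⟩
    have hsq := isqd_mul_self (4 * q + 3)
    have hconj := congrArg conj h
    rw [map_mul, map_add, conj_isqd, map_one, Complex.conj_ofNat] at hconj
    push_cast at hsq
    refine ⟨1, q + 1, ?_, ?_⟩ <;> push_cast
    · linear_combination (hconj + h) / 2
    · linear_combination (2 * OdGen (4 * q + 3) + isqd (4 * q + 3) - 1) / 4 * h + hsq / 4
  · exact ⟨0, d, by simp [OdGen_eq_isqd hd, conj_isqd],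
      by simp [OdGen_eq_isqd hd, isqd_mul_self]⟩

/-- The ring of integers `O_d` as a subring of `ℂ`. -/
def integerRing (d : ℕ) : Subring ℂ where
  carrier := {z | inOd d z}
  mul_mem' := by
    obtain ⟨t, n, -, hsq⟩ := exists_conj_OdGen_and_sq_OdGen d
    rintro _ _ ⟨a, b, rfl⟩ ⟨a', b', rfl⟩
    refine ⟨a * a' - b * b' * n, a * b' + b * a' + b * b' * t, ?_⟩
    push_cast
    linear_combination (b * b' : ℂ) * hsq
  one_mem' := ⟨1, 0, by simp⟩
  add_mem' := by
    rintro _ _ ⟨a, b, rfl⟩ ⟨a', b', rfl⟩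
    exact ⟨a + a', b + b', by push_cast; ring⟩
  zero_mem' := ⟨0, 0, by simp⟩
  neg_mem' := by
    rintro _ ⟨a, b, rfl⟩
    exact ⟨-a, -b, by push_cast; ring⟩

lemma mem_integerRing {d : ℕ} {z : ℂ} : z ∈ integerRing d ↔ inOd d z := Iff.rfl

lemma OdGen_mem_integerRing (d : ℕ) : OdGen d ∈ integerRing d := ⟨0, 1, by simp⟩

lemma conj_mem_integerRing {d : ℕ} {z : ℂ} (hz : z ∈ integerRing d) :
    conj z ∈ integerRing d := by
  obtain ⟨t, n, hconj, -⟩ := exists_conj_OdGen_and_sq_OdGen d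
  obtain ⟨a, b, rfl⟩ := hz
  refine ⟨a + b * t, -b, ?_⟩
  rw [map_add, map_mul, map_intCast, map_intCast, hconj]
  push_cast
  ring

lemma isqd_mem_integerRing (d : ℕ) : isqd d ∈ integerRing d := by
  by_cases hd : d % 4 = 3
  · exact ⟨-1, 2, by push_cast; linear_combination -two_mul_OdGen hd⟩
  · exact OdGen_eq_isqd hd ▸ OdGen_mem_integerRing d

lemma exists_eq_intCast_add_isqd_mul {d : ℕ} {z : ℂ} (hz : z ∈ integerRing d) :
    ∃ n : ℤ, ∃ w ∈ integerRing d, z = n + isqd d * w := by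
  obtain ⟨a, b, rfl⟩ := hz
  by_cases hd : d % 4 = 3
  · -- `ω = (d + 1) / 2 + i√d * ω`
    obtain ⟨q, hq⟩ : ∃ q, d = 4 * q + 3 := ⟨d / 4, by lia⟩
    have hdq : (d : ℂ) = 4 * q + 3 := by exact_mod_cast hq
    refine ⟨a + b * (2 * q + 2), b * OdGen d,
      mul_mem (intCast_mem _ b) (OdGen_mem_integerRing d), ?_⟩
    push_cast
    linear_combination (b / 2 : ℂ) * ((1 - isqd d) * two_mul_OdGen hd - isqd_mul_self d + hdq)
  · exact ⟨a, b, intCast_mem _ b, by rw [OdGen_eq_isqd hd, mul_comm (b : ℂ)]⟩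

lemma exists_eq_intCast_mul_isqd {d : ℕ} {z : ℂ} (hz : z ∈ integerRing d)
    (hskew : conj z = -z) : ∃ m : ℤ, z = m * isqd d := by
  obtain ⟨a, b, rfl⟩ := hz
  by_cases hd : d % 4 = 3
  · have hω := two_mul_OdGen hd
    have hconj := congrArg conj hω
    simp only [map_mul, map_add, map_one, map_intCast, conj_isqd, Complex.conj_ofNat]
      at hconj hskew
    have hb : (b : ℂ) = -2 * a := by
      linear_combination hskew - (b / 2 : ℂ) * (hω + hconj)
    exact ⟨-a, by push_cast; linear_combination OdGen d * hb - a * hω⟩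
  · simp only [OdGen_eq_isqd hd, map_add, map_mul, map_intCast, conj_isqd] at hskew ⊢
    exact ⟨b, by linear_combination hskew / 2⟩

lemma intCast_eq_isqd_mul_iff {d : ℕ} [NeZero d] {n : ℤ} :
    (∃ w ∈ integerRing d, (n : ℂ) = isqd d * w) ↔ (d : ℤ) ∣ n := by
  constructor
  · rintro ⟨w, hw, h⟩
    have hskew : conj w = -w := by
      have hconj := congrArg conj h
      rw [map_intCast, h, map_mul, conj_isqd] at hconj
      exact mul_left_cancel₀ (isqd_ne_zero d) (by linear_combination hconj)
    obtain ⟨m, rfl⟩ := exists_eq_intCast_mul_isqd hw hskew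
    refine ⟨-m, ?_⟩
    rify
    apply Complex.ofReal_injective
    push_cast
    linear_combination h + m * isqd_mul_self d
  · rintro ⟨m, rfl⟩
    refine ⟨-(m * isqd d), neg_mem (mul_mem (intCast_mem _ m) (isqd_mem_integerRing d)), ?_⟩
    push_cast
    linear_combination (m : ℂ) * isqd_mul_self d

/-- `i√d` as an element of `O_d`; it generates the ramified ideal modulo which all
reductions are taken. -/
def sqrtNeg (d : ℕ) : integerRing d := ⟨isqd d, isqd_mem_integerRing d⟩

lemma sqrtNeg_dvd_iff {d : ℕ} {z : integerRing d} :
    sqrtNeg d ∣ z ↔ ∃ w ∈ integerRing d, (z : ℂ) = isqd d * w :=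
  ⟨fun ⟨w, h⟩ => ⟨w, w.2, congrArg Subtype.val h⟩, fun ⟨w, hw, h⟩ => ⟨⟨w, hw⟩, Subtype.ext h⟩⟩

instance charP_quotient_sqrtNeg (d : ℕ) [NeZero d] :
    CharP (integerRing d ⧸ Ideal.span {sqrtNeg d}) d where
  cast_eq_zero_iff n := by
    rw [← map_natCast (Ideal.Quotient.mk _), Ideal.Quotient.eq_zero_iff_mem,
      Ideal.mem_span_singleton, sqrtNeg_dvd_iff, ← Int.natCast_dvd_natCast,
      ← intCast_eq_isqd_mul_iff]
    simp

lemma castHom_quotient_sqrtNeg_bijective (d : ℕ) [NeZero d] :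
    Function.Bijective
      (ZMod.castHom dvd_rfl (integerRing d ⧸ Ideal.span {sqrtNeg d}) : ZMod d → _) := by
  refine ⟨ZMod.castHom_injective _, fun x => ?_⟩
  obtain ⟨⟨z, hz⟩, rfl⟩ := Ideal.Quotient.mk_surjective x
  obtain ⟨n, w, hw, rfl⟩ := exists_eq_intCast_add_isqd_mul hz
  refine ⟨n, ?_⟩
  rw [map_intCast, ← map_intCast (Ideal.Quotient.mk (Ideal.span {sqrtNeg d})),
    Ideal.Quotient.eq, Ideal.mem_span_singleton, sqrtNeg_dvd_iff]
  exact ⟨-w, neg_mem hw, by simp⟩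

/-- Reduction of `O_d` modulo `i√d`, with the residue ring identified with `ℤ/d`. -/
def residue (d : ℕ) [NeZero d] : integerRing d →+* ZMod d :=
  ((RingEquiv.ofBijective _ (castHom_quotient_sqrtNeg_bijective d)).symm : _ →+* ZMod d).comp
    (Ideal.Quotient.mk (Ideal.span {sqrtNeg d}))

section Residue

variable {d : ℕ} [NeZero d]

lemma residue_eq_zero_iff_dvd {z : integerRing d} : residue d z = 0 ↔ sqrtNeg d ∣ z := by
  rw [residue, RingHom.comp_apply, RingHom.coe_coe, EmbeddingLike.map_eq_zero_iff,
    Ideal.Quotient.eq_zero_iff_mem, Ideal.mem_span_singleton]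

lemma residue_eq_zero_iff_inv_mul_mem {z : integerRing d} :
    residue d z = 0 ↔ (isqd d)⁻¹ * z ∈ integerRing d := by
  rw [residue_eq_zero_iff_dvd, sqrtNeg_dvd_iff]
  constructor
  · rintro ⟨w, hw, h⟩
    rwa [h, inv_mul_cancel_left₀ (isqd_ne_zero d)]
  · exact fun h => ⟨_, h, (mul_inv_cancel_left₀ (isqd_ne_zero d) _).symm⟩

lemma residue_conj {z : ℂ} (hz : z ∈ integerRing d) :
    residue d ⟨conj z, conj_mem_integerRing hz⟩ = residue d ⟨z, hz⟩ := by
  obtain ⟨n, w, hw, rfl⟩ := exists_eq_intCast_add_isqd_mul hz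
  rw [← sub_eq_zero, ← map_sub, residue_eq_zero_iff_dvd, sqrtNeg_dvd_iff]
  refine ⟨-(conj w + w), neg_mem (add_mem (conj_mem_integerRing hw) hw), ?_⟩
  simp only [AddSubgroupClass.coe_sub, map_add, map_mul, map_intCast, conj_isqd]
  ring

end Residue

/-! ### The unitary group of `J` and its tiled orders -/

lemma matJ_mul (M : Matrix (Fin 3) (Fin 3) ℂ) : matJ * M = M.submatrix Fin.rev id := by
  ext j k
  fin_cases j <;> simp [matJ, Matrix.mul_apply, Fin.sum_univ_three, Fin.rev]

lemma mul_matJ (M : Matrix (Fin 3) (Fin 3) ℂ) : M * matJ = M.submatrix id Fin.rev := by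
  ext j k
  fin_cases k <;> simp [matJ, Matrix.mul_apply, Fin.sum_univ_three, Fin.rev]

lemma matJ_mul_self : matJ * matJ = 1 := by
  rw [matJ_mul]
  ext j k
  fin_cases j <;> fin_cases k <;> simp [matJ]

lemma matJ_mul_conjTranspose_mul_matJ_mul {M : Matrix (Fin 3) (Fin 3) ℂ}
    (hM : Mᴴ * matJ * M = matJ) : matJ * Mᴴ * matJ * M = 1 := by
  rw [Matrix.mul_assoc, Matrix.mul_assoc, ← Matrix.mul_assoc Mᴴ, hM, matJ_mul_self]

/-- The unitary group `U(2,1;J)`. -/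
def unitaryJ : Subgroup (GL (Fin 3) ℂ) where
  carrier := {g | (g : Matrix (Fin 3) (Fin 3) ℂ)ᴴ * matJ * g = matJ}
  one_mem' := by simp
  mul_mem' := by
    intro g h (hg : _ = _) (hh : _ = _)
    calc ((g * h : GL (Fin 3) ℂ) : Matrix (Fin 3) (Fin 3) ℂ)ᴴ * matJ * (g * h : GL (Fin 3) ℂ)
        = (h : Matrix (Fin 3) (Fin 3) ℂ)ᴴ * ((g : Matrix (Fin 3) (Fin 3) ℂ)ᴴ * matJ * g) * h := by
          simp only [Units.val_mul, conjTranspose_mul, Matrix.mul_assoc]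
      _ = matJ := by rw [hg, hh]
  inv_mem' := by
    intro g (hg : _ = _)
    calc ((g⁻¹ : GL (Fin 3) ℂ) : Matrix (Fin 3) (Fin 3) ℂ)ᴴ * matJ * (g⁻¹ : GL (Fin 3) ℂ)
        = (g * g⁻¹ : GL (Fin 3) ℂ).valᴴ * matJ * (g * g⁻¹ : GL (Fin 3) ℂ).val := by
          conv_lhs => rw [← hg]
          simp only [Units.val_mul, conjTranspose_mul, Matrix.mul_assoc]
      _ = matJ := by simp

/-- The element of `U(2,1;J)` given by a matrix preserving the form `J`. -/
def unitaryOfMatrix (M : Matrix (Fin 3) (Fin 3) ℂ) (hM : Mᴴ * matJ * M = matJ) : unitaryJ :=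
  ⟨⟨M, matJ * Mᴴ * matJ, mul_eq_one_comm.1 (matJ_mul_conjTranspose_mul_matJ_mul hM),
    matJ_mul_conjTranspose_mul_matJ_mul hM⟩, hM⟩

lemma coe_unitaryOfMatrix (M : Matrix (Fin 3) (Fin 3) ℂ) (hM : Mᴴ * matJ * M = matJ) :
    ((unitaryOfMatrix M hM : GL (Fin 3) ℂ) : Matrix (Fin 3) (Fin 3) ℂ) = M := rfl

lemma inv_apply_of_mem_unitaryJ {g : GL (Fin 3) ℂ} (hg : g ∈ unitaryJ) (j k : Fin 3) :
    (g⁻¹ : GL (Fin 3) ℂ) j k = conj (g k.rev j.rev) := by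
  rw [Units.inv_eq_of_mul_eq_one_left (matJ_mul_conjTranspose_mul_matJ_mul hg), matJ_mul,
    mul_matJ]
  rfl

lemma inv_mul_apply_of_mem_unitaryJ {g : GL (Fin 3) ℂ} (hg : g ∈ unitaryJ) (h : GL (Fin 3) ℂ)
    (j k : Fin 3) :
    (g⁻¹ * h : GL (Fin 3) ℂ) j k =
      conj (g 2 j.rev) * h 0 k + conj (g 1 j.rev) * h 1 k + conj (g 0 j.rev) * h 2 k := by
  rw [Units.val_mul, Matrix.mul_apply, Fin.sum_univ_three]
  simp only [inv_apply_of_mem_unitaryJ hg]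
  rfl

/-- Exponents `e j k` of a tiled order in `M₃(ℚ(i√d))`, whose `(j, k)` entries are those `z` with
`(i√d) ^ e j k * z ∈ O_d`. The first two conditions make it a ring, the last one makes it stable
under the adjoint `M ↦ J Mᴴ J`. -/
structure TiledExponent where
  toFun : Fin 3 → Fin 3 → ℤ
  diag_nonneg : ∀ j, 0 ≤ toFun j j
  add_le : ∀ j k l, toFun j k + toFun k l ≤ toFun j l
  rev_rev : ∀ j k, toFun k.rev j.rev = toFun j k

instance : CoeFun TiledExponent fun _ => Fin 3 → Fin 3 → ℤ := ⟨TiledExponent.toFun⟩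

lemma isqd_zpow_mem_integerRing {d : ℕ} {n : ℤ} (hn : 0 ≤ n) : isqd d ^ n ∈ integerRing d := by
  lift n to ℕ using hn
  exact zpow_natCast (isqd d) n ▸ pow_mem (isqd_mem_integerRing d) n

/-- The group of matrices in `U(2,1;J)` lying in the tiled order with exponents `e`. -/
def tiledUnitary (d : ℕ) [NeZero d] (e : TiledExponent) : Subgroup (GL (Fin 3) ℂ) where
  carrier := {g | g ∈ unitaryJ ∧ ∀ j k, isqd d ^ e j k * g j k ∈ integerRing d}
  one_mem' := by
    refine ⟨one_mem _, fun j k => ?_⟩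
    obtain rfl | hjk := eq_or_ne j k
    · simpa using isqd_zpow_mem_integerRing (e.diag_nonneg j)
    · simp [hjk, zero_mem]
  mul_mem' := by
    rintro g h ⟨hg, hgO⟩ ⟨hh, hhO⟩
    refine ⟨mul_mem hg hh, fun j l => ?_⟩
    rw [Units.val_mul, Matrix.mul_apply, Finset.mul_sum]
    refine sum_mem fun k _ => ?_
    have hexp : isqd d ^ e j l =
        isqd d ^ (e j l - (e j k + e k l)) * isqd d ^ e j k * isqd d ^ e k l := by
      rw [mul_assoc, ← zpow_add₀ (isqd_ne_zero d), ← zpow_add₀ (isqd_ne_zero d), sub_add_cancel]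
    convert mul_mem (isqd_zpow_mem_integerRing (sub_nonneg.2 (e.add_le j k l)))
      (mul_mem (hgO j k) (hhO k l)) using 1
    rw [hexp]
    ring
  inv_mem' := by
    rintro g ⟨hg, hgO⟩
    refine ⟨inv_mem hg, fun j k => ?_⟩
    have hconj := conj_mem_integerRing (hgO k.rev j.rev)
    rw [map_mul, map_zpow₀, conj_isqd, e.rev_rev] at hconj
    rw [inv_apply_of_mem_unitaryJ hg]
    obtain he | he := (e j k).even_or_odd
    · rwa [he.neg_zpow] at hconj
    · rwa [he.neg_zpow, neg_mul, neg_mem_iff] at hconj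

/-- The exponents of the full order `M₃(O_d)`. -/
def picardExponent : TiledExponent where
  toFun := 0
  diag_nonneg := by decide
  add_le := by decide
  rev_rev := by decide

/-- The exponents of the order defining the sister group. -/
def sisterExponent : TiledExponent where
  toFun := ![![0, 0, 1], ![-1, 0, 0], ![-1, -1, 0]]
  diag_nonneg := by decide
  add_le := by decide
  rev_rev := by decide

lemma forall_sisterExponent_iff {d : ℕ} {M : Matrix (Fin 3) (Fin 3) ℂ} :
    (∀ j k, isqd d ^ sisterExponent j k * M j k ∈ integerRing d) ↔
      (M 0 0 ∈ integerRing d ∧ M 0 1 ∈ integerRing d ∧ isqd d * M 0 2 ∈ integerRing d) ∧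
      ((isqd d)⁻¹ * M 1 0 ∈ integerRing d ∧ M 1 1 ∈ integerRing d ∧ M 1 2 ∈ integerRing d) ∧
      (isqd d)⁻¹ * M 2 0 ∈ integerRing d ∧ (isqd d)⁻¹ * M 2 1 ∈ integerRing d ∧
        M 2 2 ∈ integerRing d := by
  simp [sisterExponent, Fin.forall_fin_succ]

/-- The Picard modular group `Γ^(d)` as a subgroup of `GL₃(ℂ)`. -/
abbrev picardGroup (d : ℕ) [NeZero d] : Subgroup (GL (Fin 3) ℂ) := tiledUnitary d picardExponent

/-- The sister group `Γ_s^(d)` as a subgroup of `GL₃(ℂ)`. -/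
abbrev sisterGroup (d : ℕ) [NeZero d] : Subgroup (GL (Fin 3) ℂ) := tiledUnitary d sisterExponent

section Groups

variable {d : ℕ} [NeZero d]

lemma mem_tiledUnitary {e : TiledExponent} {g : GL (Fin 3) ℂ} :
    g ∈ tiledUnitary d e ↔ g ∈ unitaryJ ∧ ∀ j k, isqd d ^ e j k * g j k ∈ integerRing d :=
  Iff.rfl

lemma mem_picardGroup {g : GL (Fin 3) ℂ} :
    g ∈ picardGroup d ↔ g ∈ unitaryJ ∧ ∀ j k, g j k ∈ integerRing d := by
  simp [mem_tiledUnitary, picardExponent]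

lemma mem_sisterGroup {g : GL (Fin 3) ℂ} :
    g ∈ sisterGroup d ↔ g ∈ unitaryJ ∧
      (g 0 0 ∈ integerRing d ∧ g 0 1 ∈ integerRing d ∧ isqd d * g 0 2 ∈ integerRing d) ∧
      ((isqd d)⁻¹ * g 1 0 ∈ integerRing d ∧ g 1 1 ∈ integerRing d ∧ g 1 2 ∈ integerRing d) ∧
      (isqd d)⁻¹ * g 2 0 ∈ integerRing d ∧ (isqd d)⁻¹ * g 2 1 ∈ integerRing d ∧
        g 2 2 ∈ integerRing d := by
  rw [mem_tiledUnitary, forall_sisterExponent_iff]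

lemma image_val_tiledUnitary (e : TiledExponent) :
    Units.val '' (tiledUnitary d e : Set (GL (Fin 3) ℂ)) =
      {M | inU21 M ∧ ∀ j k, isqd d ^ e j k * M j k ∈ integerRing d} := by
  ext M
  constructor
  · rintro ⟨g, ⟨hg, hgO⟩, rfl⟩
    exact ⟨⟨g.isUnit, hg⟩, hgO⟩
  · rintro ⟨⟨⟨g, rfl⟩, hg⟩, hgO⟩
    exact ⟨g, ⟨hg, hgO⟩, rfl⟩

lemma image_val_picardGroup :
    Units.val '' (picardGroup d : Set (GL (Fin 3) ℂ)) = GammaPd d := by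
  rw [image_val_tiledUnitary]
  simp [picardExponent, GammaPd, mem_integerRing]

lemma image_val_sisterGroup :
    Units.val '' (sisterGroup d : Set (GL (Fin 3) ℂ)) = GammaSd d := by
  rw [image_val_tiledUnitary]
  ext M
  simp only [forall_sisterExponent_iff, GammaSd, div_eq_inv_mul, ← mem_integerRing,
    Set.mem_ofPred_eq]
  tauto

lemma image_val_picardGroup_inf_sisterGroup :
    Units.val '' ((picardGroup d ⊓ sisterGroup d : Subgroup (GL (Fin 3) ℂ)) :
      Set (GL (Fin 3) ℂ)) = Hd d := by
  rw [Subgroup.coe_inf, Set.image_inter Units.val_injective, image_val_picardGroup,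
    image_val_sisterGroup, Hd]

end Groups

/-! ### The index in the Picard modular group -/

section Reduction

variable {d : ℕ} [NeZero d]

/-- Entrywise reduction modulo `i√d` of the Picard modular group. -/
def reduction (d : ℕ) [NeZero d] : picardGroup d →* Matrix (Fin 3) (Fin 3) (ZMod d) where
  toFun g := Matrix.of fun j k => residue d ⟨g.1 j k, (mem_picardGroup.1 g.2).2 j k⟩
  map_one' := by
    ext j k
    obtain rfl | hjk := eq_or_ne j k
    · rw [Matrix.one_apply_eq, ← map_one (residue d)]
      exact congrArg (residue d) (Subtype.ext (by simp))
    · rw [Matrix.one_apply_ne hjk, ← map_zero (residue d)]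
      exact congrArg (residue d) (Subtype.ext (by simp [hjk]))
  map_mul' g h := by
    ext j k
    simp only [Matrix.mul_apply, Matrix.of_apply, ← map_mul, ← map_sum]
    refine congrArg _ (Subtype.ext ?_)
    simp [Matrix.mul_apply]

lemma reduction_apply (g : picardGroup d) (j k : Fin 3) :
    reduction d g j k = residue d ⟨g.1 j k, (mem_picardGroup.1 g.2).2 j k⟩ := rfl

lemma reduction_inv_apply (g : picardGroup d) (j k : Fin 3) :
    reduction d g⁻¹ j k = reduction d g k.rev j.rev := by
  simp only [reduction_apply, ← residue_conj ((mem_picardGroup.1 g.2).2 _ _)]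
  exact congrArg _ (Subtype.ext (inv_apply_of_mem_unitaryJ g.2.1 j k))

lemma reduction_inv_mul_apply (g h : picardGroup d) (j k : Fin 3) :
    reduction d (g⁻¹ * h) j k = reduction d g 2 j.rev * reduction d h 0 k +
      reduction d g 1 j.rev * reduction d h 1 k + reduction d g 0 j.rev * reduction d h 2 k := by
  rw [map_mul, Matrix.mul_apply, Fin.sum_univ_three]
  simp only [reduction_inv_apply]
  rfl

lemma reduction_form (g : picardGroup d) (j k : Fin 3) :
    reduction d g 2 j.rev * reduction d g 0 k + reduction d g 1 j.rev * reduction d g 1 k +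
      reduction d g 0 j.rev * reduction d g 2 k = (1 : Matrix (Fin 3) (Fin 3) (ZMod d)) j k := by
  rw [← reduction_inv_mul_apply, inv_mul_cancel, map_one]

lemma reduction_firstCol_isotropic (g : picardGroup d) :
    reduction d g 1 0 * reduction d g 1 0 = -2 * reduction d g 0 0 * reduction d g 2 0 := by
  have h : _ = (0 : ZMod d) := reduction_form g 2 0
  rw [show (2 : Fin 3).rev = 0 from rfl] at h
  linear_combination h

/-- The Weyl element `J` of the Picard modular group. -/
def picardWeyl (d : ℕ) [NeZero d] : picardGroup d :=
  ⟨unitaryOfMatrix matJ (by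
    rw [Matrix.mul_assoc, matJ_mul_self, Matrix.mul_one]
    ext j k
    fin_cases j <;> fin_cases k <;> simp [matJ]), mem_picardGroup.2 ⟨Subtype.prop _, by
      intro j k
      rw [coe_unitaryOfMatrix]
      fin_cases j <;> fin_cases k <;> simp [matJ, one_mem, zero_mem]⟩⟩

/-- The lower Heisenberg translation with first column `(1, y, z)`. -/
def picardTranslation (y z : integerRing d) (hyz : (z : ℂ) + conj (y : ℂ) * y + conj (z : ℂ) = 0) :
    picardGroup d :=
  ⟨unitaryOfMatrix !![1, 0, 0; (y : ℂ), 1, 0; (z : ℂ), -conj (y : ℂ), 1] (by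
    rw [Matrix.mul_assoc, matJ_mul]
    ext j k
    fin_cases j <;> fin_cases k <;>
      simp [matJ, Matrix.mul_apply, Fin.sum_univ_three, Fin.rev, hyz]),
    mem_picardGroup.2 ⟨Subtype.prop _, by
      intro j k
      rw [coe_unitaryOfMatrix]
      fin_cases j <;> fin_cases k <;>
        simp [one_mem, zero_mem, conj_mem_integerRing]⟩⟩

lemma reduction_picardWeyl_inv_mul (g : picardGroup d) :
    reduction d ((picardWeyl d)⁻¹ * g) 2 0 = reduction d g 0 0 := by
  have h₀ : reduction d (picardWeyl d) 0 0 = 0 := map_zero (residue d)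
  have h₁ : reduction d (picardWeyl d) 1 0 = 0 := map_zero (residue d)
  have h₂ : reduction d (picardWeyl d) 2 0 = 1 := map_one (residue d)
  rw [reduction_inv_mul_apply, show (2 : Fin 3).rev = 0 from rfl, h₀, h₁, h₂, zero_mul, zero_mul,
    one_mul, add_zero, add_zero]

lemma reduction_picardTranslation_inv_mul (y z : integerRing d)
    (hyz : (z : ℂ) + conj (y : ℂ) * y + conj (z : ℂ) = 0) (g : picardGroup d) :
    reduction d ((picardTranslation y z hyz)⁻¹ * g) 2 0 =
      residue d z * reduction d g 0 0 + residue d y * reduction d g 1 0 + reduction d g 2 0 := by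
  have h₀ : reduction d (picardTranslation y z hyz) 0 0 = 1 := map_one (residue d)
  have h₁ : reduction d (picardTranslation y z hyz) 1 0 = residue d y := rfl
  have h₂ : reduction d (picardTranslation y z hyz) 2 0 = residue d z := rfl
  rw [reduction_inv_mul_apply, show (2 : Fin 3).rev = 0 from rfl, h₀, h₁, h₂, one_mul]

end Reduction

section PicardIndex

variable {d : ℕ} [Fact d.Prime]

lemma reduction_firstCol_ne_zero {g : picardGroup d} (h₀ : reduction d g 0 0 = 0)
    (h₁ : reduction d g 1 0 = 0) : reduction d g 2 0 ≠ 0 := by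
  intro h₂
  simpa [h₀, h₁, h₂] using reduction_form g 0 0

lemma reduction_one_eq_zero_of_reduction_two_eq_zero {g : picardGroup d}
    (h : reduction d g 2 0 = 0) : reduction d g 1 0 = 0 := by
  simpa [h] using reduction_firstCol_isotropic g

lemma mem_sisterGroup_iff_reduction_eq_zero (g : picardGroup d) :
    (g : GL (Fin 3) ℂ) ∈ sisterGroup d ↔ reduction d g 2 0 = 0 := by
  have hO := (mem_picardGroup.1 g.2).2
  rw [mem_sisterGroup]
  simp only [reduction_apply, residue_eq_zero_iff_inv_mul_mem]
  refine ⟨fun h => h.2.2.2.1, fun h => ?_⟩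
  have h₂₀ : reduction d g 2 0 = 0 := residue_eq_zero_iff_inv_mul_mem.2 h
  have h₁₀ : reduction d g 1 0 = 0 := reduction_one_eq_zero_of_reduction_two_eq_zero h₂₀
  have h₀₀ : reduction d g 0 0 ≠ 0 := fun h₀₀ => reduction_firstCol_ne_zero h₀₀ h₁₀ h₂₀
  have h₂₁ : reduction d g 2 1 = 0 := by
    simpa [h₂₀, h₁₀, h₀₀] using reduction_form g 2 1
  exact ⟨g.2.1, ⟨hO _ _, hO _ _, mul_mem (isqd_mem_integerRing d) (hO _ _)⟩,
    ⟨residue_eq_zero_iff_inv_mul_mem.1 h₁₀, hO _ _, hO _ _⟩, h,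
    residue_eq_zero_iff_inv_mul_mem.1 h₂₁, hO _ _⟩

lemma isotropic_pairing_eq_zero_iff {F : Type*} [Field F] {a b c : F} (two_ne : (2 : F) ≠ 0)
    (hiso : b * b = -2 * a * c) (ha : a ≠ 0) (t : F) :
    -(2 * t ^ 2) * a + 2 * t * b + c = 0 ↔ b / 2 = t * a := by
  have hsq : (b - 2 * t * a) ^ 2 = -2 * a * (-(2 * t ^ 2) * a + 2 * t * b + c) := by
    linear_combination hiso
  calc -(2 * t ^ 2) * a + 2 * t * b + c = 0
      ↔ (b - 2 * t * a) ^ 2 = 0 := by simp [hsq, ha, two_ne]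
    _ ↔ b / 2 = t * a := by
      rw [sq_eq_zero_iff, sub_eq_zero, div_eq_iff two_ne, mul_assoc, mul_comm 2]

lemma sisterGroup_relIndex_picardGroup_of_ne_two (hd : d ≠ 2) :
    (sisterGroup d).relIndex (picardGroup d) = d + 1 := by
  have two_ne : (2 : ZMod d) ≠ 0 := Ring.two_ne_zero (by rwa [ZMod.ringChar_zmod_n])
  let n (t : ZMod d) : picardGroup d :=
    picardTranslation (2 * t.val : ℕ) (-(2 * t.val ^ 2 : ℕ)) (by
      simp only [NegMemClass.coe_neg, SubringClass.coe_natCast, map_neg, map_natCast]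
      push_cast
      ring)
  refine (index_eq_natCard_add_one_of_slope (picardWeyl d) n fun g => ?_).trans (by simp)
  have hn (t : ZMod d) : reduction d ((n t)⁻¹ * g) 2 0 =
      -(2 * t ^ 2) * reduction d g 0 0 + 2 * t * reduction d g 1 0 + reduction d g 2 0 := by
    simp only [n, reduction_picardTranslation_inv_mul, map_neg, map_natCast]
    simp
  simp only [Subgroup.mem_subgroupOf, mem_sisterGroup_iff_reduction_eq_zero,
    reduction_picardWeyl_inv_mul, hn]
  have hiso := reduction_firstCol_isotropic g
  by_cases h₀ : reduction d g 0 0 = 0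
  · have h₁ : reduction d g 1 0 = 0 := by simpa [h₀] using hiso
    exact ⟨1, 0, fun _ => one_ne_zero, by simp [h₀],
      fun t => by simp [h₀, h₁, reduction_firstCol_ne_zero h₀ h₁]⟩
  · exact ⟨_, _, fun h => absurd h h₀, Iff.rfl, isotropic_pairing_eq_zero_iff two_ne hiso h₀⟩

lemma sisterGroup_relIndex_picardGroup_two : (sisterGroup 2).relIndex (picardGroup 2) = 2 + 1 := by
  let n (t : ZMod 2) : picardGroup 2 :=
    picardTranslation (t.val * sqrtNeg 2) (-t.val ^ 2) (by
      simp only [sqrtNeg, MulMemClass.coe_mul, NegMemClass.coe_neg, SubmonoidClass.coe_pow,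
        SubringClass.coe_natCast, map_mul, map_neg, map_pow, map_natCast, conj_isqd]
      linear_combination -(t.val : ℂ) ^ 2 * isqd_mul_self 2)
  refine (index_eq_natCard_add_one_of_slope (picardWeyl 2) n fun g => ?_).trans (by simp)
  have h₁ : reduction 2 g 1 0 = 0 := by
    have hiso := reduction_firstCol_isotropic g
    rwa [show (-2 : ZMod 2) = 0 from rfl, zero_mul, zero_mul, mul_self_eq_zero] at hiso
  have hn (t : ZMod 2) : reduction 2 ((n t)⁻¹ * g) 2 0 =
      reduction 2 g 2 0 - t * reduction 2 g 0 0 := by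
    have ht : t ^ 2 = t := ZMod.pow_card t
    simp only [n, reduction_picardTranslation_inv_mul, h₁, map_neg, map_pow, map_natCast,
      ZMod.natCast_zmod_val, ht]
    ring
  simp only [Subgroup.mem_subgroupOf, mem_sisterGroup_iff_reduction_eq_zero,
    reduction_picardWeyl_inv_mul, hn, sub_eq_zero]
  exact ⟨_, _, fun h => reduction_firstCol_ne_zero h h₁, Iff.rfl, fun _ => Iff.rfl⟩

lemma sisterGroup_relIndex_picardGroup : (sisterGroup d).relIndex (picardGroup d) = d + 1 := by
  obtain rfl | hd := eq_or_ne d 2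
  · exact sisterGroup_relIndex_picardGroup_two
  · exact sisterGroup_relIndex_picardGroup_of_ne_two hd

end PicardIndex

/-! ### The index in the sister group -/

section SisterResidue

variable {d : ℕ} [NeZero d]

/-- The reduction modulo `i√d` of `i√d * g 0 2`, which vanishes exactly when `g` is integral. -/
def cornerResidue (g : sisterGroup d) : ZMod d :=
  residue d ⟨isqd d * g.1 0 2, (mem_sisterGroup.1 g.2).2.1.2.2⟩

/-- The reduction modulo `i√d` of the last diagonal entry. -/
def diagResidue (g : sisterGroup d) : ZMod d :=
  residue d ⟨g.1 2 2, (mem_sisterGroup.1 g.2).2.2.2.2.2⟩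

lemma mem_picardGroup_iff_cornerResidue_eq_zero (g : sisterGroup d) :
    (g : GL (Fin 3) ℂ) ∈ picardGroup d ↔ cornerResidue g = 0 := by
  obtain ⟨hg, ⟨h₀₀, h₀₁, -⟩, ⟨h₁₀, h₁₁, h₁₂⟩, h₂₀, h₂₁, h₂₂⟩ := mem_sisterGroup.1 g.2
  have integral {z : ℂ} (hz : (isqd d)⁻¹ * z ∈ integerRing d) : z ∈ integerRing d := by
    simpa [isqd_ne_zero] using mul_mem (isqd_mem_integerRing d) hz
  rw [mem_picardGroup, cornerResidue, residue_eq_zero_iff_inv_mul_mem,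
    inv_mul_cancel_left₀ (isqd_ne_zero d)]
  refine ⟨fun h => h.2 0 2, fun h₀₂ => ⟨hg, ?_⟩⟩
  simp only [Fin.forall_fin_succ]
  simp [h₀₀, h₀₁, h₀₂, h₁₁, h₁₂, h₂₂, integral h₁₀, integral h₂₀, integral h₂₁]

/-- The Weyl element of the sister group. -/
def sisterWeyl (d : ℕ) [NeZero d] : sisterGroup d :=
  ⟨unitaryOfMatrix !![0, 0, (isqd d)⁻¹; 0, 1, 0; -isqd d, 0, 0] (by
    rw [Matrix.mul_assoc, matJ_mul]
    ext j k
    fin_cases j <;> fin_cases k <;>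
      simp [matJ, Matrix.mul_apply, Fin.sum_univ_three, Fin.rev, conj_isqd, isqd_ne_zero]),
    mem_sisterGroup.2 ⟨Subtype.prop _, by
      simp [coe_unitaryOfMatrix, isqd_ne_zero, zero_mem, one_mem]⟩⟩

/-- The upper translation by `n / i√d` in the centre of the Heisenberg group. -/
def sisterTranslation (d : ℕ) [NeZero d] (n : ℤ) : sisterGroup d :=
  ⟨unitaryOfMatrix !![1, 0, n * (isqd d)⁻¹; 0, 1, 0; 0, 0, 1] (by
    rw [Matrix.mul_assoc, matJ_mul]
    ext j k
    fin_cases j <;> fin_cases k <;>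
      simp [matJ, Matrix.mul_apply, Fin.sum_univ_three, Fin.rev, conj_isqd]),
    mem_sisterGroup.2 ⟨Subtype.prop _, by
      simp [coe_unitaryOfMatrix, mul_left_comm (isqd d), isqd_ne_zero, zero_mem, one_mem,
        intCast_mem]⟩⟩

lemma cornerResidue_sisterWeyl_inv_mul (g : sisterGroup d) :
    cornerResidue ((sisterWeyl d)⁻¹ * g) = -diagResidue g := by
  rw [cornerResidue, diagResidue, ← map_neg]
  refine congrArg _ (Subtype.ext ?_)
  simp only [Subgroup.coe_mul, Subgroup.coe_inv,
    inv_mul_apply_of_mem_unitaryJ (sisterWeyl d).2.1]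
  simp [sisterWeyl, coe_unitaryOfMatrix, conj_isqd, isqd_ne_zero]

lemma cornerResidue_sisterTranslation_inv_mul (n : ℤ) (g : sisterGroup d) :
    cornerResidue ((sisterTranslation d n)⁻¹ * g) = cornerResidue g - n * diagResidue g := by
  rw [cornerResidue, cornerResidue, diagResidue, ← map_intCast (residue d), ← map_mul, ← map_sub]
  refine congrArg _ (Subtype.ext ?_)
  simp only [Subgroup.coe_mul, Subgroup.coe_inv,
    inv_mul_apply_of_mem_unitaryJ (sisterTranslation d n).2.1]
  simp [sisterTranslation, coe_unitaryOfMatrix, conj_isqd, mul_add, mul_assoc,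
    mul_left_comm (isqd d), isqd_ne_zero, sub_eq_add_neg]

end SisterResidue

section SisterIndex

variable {d : ℕ} [Fact d.Prime]

lemma diagResidue_ne_zero {g : sisterGroup d} (h : cornerResidue g = 0) : diagResidue g ≠ 0 := by
  let g' : picardGroup d := ⟨g, (mem_picardGroup_iff_cornerResidue_eq_zero g).2 h⟩
  have h₂₀ : reduction d g' 2 0 = 0 := (mem_sisterGroup_iff_reduction_eq_zero g').1 g.2
  intro (h₂₂ : reduction d g' 2 2 = 0)
  simpa [h₂₀, h₂₂, reduction_one_eq_zero_of_reduction_two_eq_zero h₂₀] using reduction_form g' 2 2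

lemma picardGroup_relIndex_sisterGroup : (picardGroup d).relIndex (sisterGroup d) = d + 1 := by
  refine (index_eq_natCard_add_one_of_slope (sisterWeyl d)
    (fun t : ZMod d => sisterTranslation d t.val) fun g => ?_).trans (by simp)
  simp only [Subgroup.mem_subgroupOf, mem_picardGroup_iff_cornerResidue_eq_zero,
    cornerResidue_sisterWeyl_inv_mul, cornerResidue_sisterTranslation_inv_mul, neg_eq_zero,
    sub_eq_zero, Int.cast_natCast, ZMod.natCast_zmod_val]
  exact ⟨_, _, fun hv hu => diagResidue_ne_zero hu hv, Iff.rfl, fun _ => Iff.rfl⟩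

end SisterIndex

end PicardModular

open PicardModular in
theorem Hd_index_general (d : ℕ) (hd : d.Prime) :
    Nat.card {S : Set (Matrix (Fin 3) (Fin 3) ℂ) //
      ∃ γ ∈ GammaPd d, S = (γ * ·) '' Hd d} = d + 1 ∧
    Nat.card {S : Set (Matrix (Fin 3) (Fin 3) ℂ) //
      ∃ γ ∈ GammaSd d, S = (γ * ·) '' Hd d} = d + 1 := by
  have := Fact.mk hd
  rw [← image_val_picardGroup_inf_sisterGroup, ← image_val_picardGroup, ← image_val_sisterGroup,
    natCard_leftCosets_eq_relIndex, natCard_leftCosets_eq_relIndex, Subgroup.inf_relIndex_left,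
    Subgroup.inf_relIndex_right]
  exact ⟨sisterGroup_relIndex_picardGroup, picardGroup_relIndex_sisterGroup⟩

/-- For `d ∈ {2,7,11}`, the subgroup `H^(d)` has the same finite index `d+1`
(which is `3` when `d = 2`) in both `Γ^(d)` and `Γ_s^(d)`: the number of left cosets
`γ·H^(d)` with `γ ∈ Γ^(d)` is `d+1`, and likewise for `γ ∈ Γ_s^(d)`.
In particular `Γ^(d)` and `Γ_s^(d)` are commensurable. -/
theorem Hd_index :
    ∀ d ∈ ({2, 7, 11} : Set ℕ),
      Nat.card {S : Set (Matrix (Fin 3) (Fin 3) ℂ) //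
        ∃ γ ∈ GammaPd d, S = (γ * ·) '' Hd d} = d + 1 ∧
      Nat.card {S : Set (Matrix (Fin 3) (Fin 3) ℂ) //
        ∃ γ ∈ GammaSd d, S = (γ * ·) '' Hd d} = d + 1 := by
  rintro d (rfl | rfl | rfl) <;> exact Hd_index_general _ (by norm_num)
end
end
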